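/- Fix integers k1 ≥ 2, k2 ≥ 2 and set k := min{k1,k2}. Fix reals ε > 0 and C1 > max{k1,k2} + ε. Then there exists a constant C > 0 such that for all positive integers N and M with (max{k1,k2} + ε)·N ≤ M ≤ C1·N, the number of (k1,k2)-dicores on vertex set {1,…,N} with M edges that are NOT strongly connected is at most C · N^{-2(k-1)} times the total number of (k1,k2)-dicores on {1,…,N} with M edges. Equivalently, a uniformly random (k1,k2)-dicore with N vertices and M edges is strongly connected with probability 1 − O(N^{-2(k-1)}). -/

import Mathlib

/-- A `(k1,k2)`-dicore on vertex set `Fin N` with `M` edges: a simple digraph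
(edges are ordered pairs of distinct vertices; a `Finset` has no repeated edges)
with exactly `M` edges, minimum in-degree `≥ k1` and minimum out-degree `≥ k2`. -/
def IsDicore (k1 k2 N M : ℕ) (E : Finset (Fin N × Fin N)) : Prop :=
  E.card = M ∧ (∀ e ∈ E, e.1 ≠ e.2) ∧
    ∀ v : Fin N,
      k1 ≤ (E.filter (fun e => e.2 = v)).card ∧
      k2 ≤ (E.filter (fun e => e.1 = v)).card

/-- A digraph is strongly connected if every ordered pair of vertices is joined
by a directed path. -/
def StronglyConnected {N : ℕ} (E : Finset (Fin N × Fin N)) : Prop :=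
  ∀ u v : Fin N, Relation.ReflTransGen (fun a b => (a, b) ∈ E) u v

open Finset

theorem card_mul_le_card_mul_of_leftInverse {α β γ δ : Type*} (X : Finset α) (Y : Finset β)
    (F : α → Finset γ) (G : β → Finset δ) (φ : α × γ → β × δ) (ψ : β × δ → α × γ) {f g : ℕ}
    (hφ : ∀ x ∈ X, ∀ c ∈ F x, (φ (x, c)).1 ∈ Y ∧ (φ (x, c)).2 ∈ G (φ (x, c)).1)
    (hψ : ∀ x ∈ X, ∀ c ∈ F x, ψ (φ (x, c)) = (x, c))
    (hf : ∀ x ∈ X, f ≤ #(F x)) (hg : ∀ y ∈ Y, #(G y) ≤ g) : #X * f ≤ #Y * g := by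
  calc #X * f ≤ ∑ x ∈ X, #(F x) := by
        rw [← smul_eq_mul]; exact Finset.card_nsmul_le_sum _ _ _ hf
    _ = #(X.sigma F) := (Finset.card_sigma _ _).symm
    _ ≤ #(Y.sigma G) := by
        refine Finset.card_le_card_of_injOn
          (fun s => ⟨(φ (s.1, s.2)).1, (φ (s.1, s.2)).2⟩) ?_ ?_
        · intro s hs
          simp only [coe_sigma, Set.mem_sigma_iff, mem_coe] at hs ⊢
          exact hφ _ hs.1 _ hs.2
        · rintro ⟨x, c⟩ hs ⟨x', c'⟩ hs' h
          simp only [coe_sigma, Set.mem_sigma_iff, mem_coe] at hs hs'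
          simp only [Sigma.mk.injEq, heq_eq_eq] at h
          have h2 : φ (x, c) = φ (x', c') := Prod.ext h.1 h.2
          have h3 := hψ _ hs.1 _ hs.2
          rw [h2, hψ _ hs'.1 _ hs'.2] at h3
          simpa [eq_comm] using h3
    _ = ∑ y ∈ Y, #(G y) := Finset.card_sigma _ _
    _ ≤ #Y * g := by
        rw [← smul_eq_mul]; exact Finset.sum_le_card_nsmul _ _ _ hg

section Switching

variable {V : Type*} [DecidableEq V]

/-- The number of edges with head `v`. -/
def inDegree (E : Finset (V × V)) (v : V) : ℕ := #{e ∈ E | e.2 = v}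

/-- The number of edges with tail `v`. -/
def outDegree (E : Finset (V × V)) (v : V) : ℕ := #{e ∈ E | e.1 = v}

/-- Replace the edges `(a, b)`, `(c, d)` by `(a, d)`, `(c, b)`. -/
def switchEdges (E : Finset (V × V)) (q : (V × V) × (V × V)) : Finset (V × V) :=
  (E \ {q.1, q.2}) ∪ {(q.1.1, q.2.2), (q.2.1, q.1.2)}

/-- The pair of edges `(a, b)`, `(c, d)` of `E` can be switched so as to create one new edge
`(a, d)` from `A` to `B`. -/
structure Switchable (E : Finset (V × V)) (A B : Finset V) (q : (V × V) × (V × V)) : Prop where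
  fst_mem : q.1 ∈ E
  snd_mem : q.2 ∈ E
  tail_mem : q.1.1 ∈ A
  head_notMem : q.1.2 ∉ B
  tail_notMem : q.2.1 ∉ A
  head_mem : q.2.2 ∈ B
  fst_new : (q.1.1, q.2.2) ∉ E
  snd_new : (q.2.1, q.1.2) ∉ E
  not_loop : q.2.1 ≠ q.1.2

theorem mem_switchEdges {E : Finset (V × V)} {q : (V × V) × (V × V)} {e : V × V} :
    e ∈ switchEdges E q ↔
      (e ∈ E ∧ e ≠ q.1 ∧ e ≠ q.2) ∨ e = (q.1.1, q.2.2) ∨ e = (q.2.1, q.1.2) := by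
  simp only [switchEdges, mem_union, mem_sdiff, mem_insert, mem_singleton, not_or]

theorem Switchable.card_filter_add {E : Finset (V × V)} {A B : Finset V}
    {q : (V × V) × (V × V)} (h : Switchable E A B q) (p : V × V → Prop) [DecidablePred p] :
    #{e ∈ switchEdges E q | p e} + ((if p q.1 then 1 else 0) + (if p q.2 then 1 else 0)) =
      #{e ∈ E | p e} +
        ((if p (q.1.1, q.2.2) then 1 else 0) + (if p (q.2.1, q.1.2) then 1 else 0)) := by
  obtain ⟨⟨a, b⟩, ⟨c, d⟩⟩ := q
  obtain ⟨h1, h2, h3, h4, h5, h6, h7, h8, h9⟩ := h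
  simp only at *
  have hac : a ≠ c := fun h => h5 (h ▸ h3)
  have hdisj : Disjoint (E \ {(a, b), (c, d)}) {(a, d), (c, b)} := by
    rw [Finset.disjoint_right]
    intro e he
    simp only [mem_insert, mem_singleton] at he
    rcases he with rfl | rfl <;> simp [h7, h8]
  have hsub : ({(a, b), (c, d)} : Finset (V × V)) ⊆ E := by
    intro e he
    simp only [mem_insert, mem_singleton] at he
    rcases he with rfl | rfl <;> assumption
  rw [Finset.card_filter, Finset.card_filter, switchEdges, Finset.sum_union hdisj,
    ← Finset.sum_sdiff hsub, Finset.sum_pair (by simp [hac]), Finset.sum_pair (by simp [hac])]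
  ring

theorem Switchable.card_eq {E : Finset (V × V)} {A B : Finset V}
    {q : (V × V) × (V × V)} (h : Switchable E A B q) : #(switchEdges E q) = #E := by
  have := h.card_filter_add (fun _ => True)
  simpa using this

theorem Switchable.inDegree_eq {E : Finset (V × V)} {A B : Finset V}
    {q : (V × V) × (V × V)} (h : Switchable E A B q) (v : V) :
    inDegree (switchEdges E q) v = inDegree E v := by
  have := h.card_filter_add (fun e => e.2 = v)
  simp only at this
  unfold inDegree
  omega

theorem Switchable.outDegree_eq {E : Finset (V × V)} {A B : Finset V}
    {q : (V × V) × (V × V)} (h : Switchable E A B q) (v : V) :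
    outDegree (switchEdges E q) v = outDegree E v := by
  have := h.card_filter_add (fun e => e.1 = v)
  simp only at this
  unfold outDegree
  omega

/-- The number of edges from `A` to `B`. -/
def edgeCount (E : Finset (V × V)) (A B : Finset V) : ℕ := #{e ∈ E | e.1 ∈ A ∧ e.2 ∈ B}

theorem Switchable.edgeCount_eq {E : Finset (V × V)} {A B : Finset V}
    {q : (V × V) × (V × V)} (h : Switchable E A B q) :
    edgeCount (switchEdges E q) A B = edgeCount E A B + 1 := by
  have := h.card_filter_add (fun e => e.1 ∈ A ∧ e.2 ∈ B)
  simp only [h.tail_mem, h.head_notMem, h.tail_notMem, h.head_mem] at this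
  simpa [edgeCount] using this

theorem Switchable.switchEdges_switchEdges {E : Finset (V × V)} {A B : Finset V}
    {q : (V × V) × (V × V)} (h : Switchable E A B q) :
    switchEdges (switchEdges E q) ((q.1.1, q.2.2), (q.2.1, q.1.2)) = E := by
  obtain ⟨⟨a, b⟩, ⟨c, d⟩⟩ := q
  obtain ⟨h1, h2, h3, h4, h5, h6, h7, h8, h9⟩ := h
  ext e
  simp only [mem_switchEdges] at *
  by_cases e1 : e = (a, b)
  · simp [e1, h1]
  by_cases e2 : e = (c, d)
  · simp [e2, h2]
  by_cases e3 : e = (a, d)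
  · subst e3; simp_all
  by_cases e4 : e = (c, b)
  · subst e4; simp_all
  simp [e1, e2, e3, e4]

theorem card_filter_head_mem_le (E : Finset (V × V)) (S : Finset V) {D : ℕ}
    (hD : ∀ v, inDegree E v ≤ D) : #{e ∈ E | e.2 ∈ S} ≤ #S * D := by
  have h := Finset.card_eq_sum_card_fiberwise (f := Prod.snd) (s := {e ∈ E | e.2 ∈ S}) (t := S)
    (fun e he => by simp at he; exact he.2)
  rw [h, ← smul_eq_mul]
  refine Finset.sum_le_card_nsmul _ _ _ fun v _ => le_trans (Finset.card_le_card ?_) (hD v)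
  intro e he
  simp only [mem_filter] at he ⊢
  exact ⟨he.1.1, he.2⟩

theorem card_filter_tail_mem_le (E : Finset (V × V)) (S : Finset V) {D : ℕ}
    (hD : ∀ v, outDegree E v ≤ D) : #{e ∈ E | e.1 ∈ S} ≤ #S * D := by
  have h := Finset.card_eq_sum_card_fiberwise (f := Prod.fst) (s := {e ∈ E | e.1 ∈ S}) (t := S)
    (fun e he => by simp at he; exact he.2)
  rw [h, ← smul_eq_mul]
  refine Finset.sum_le_card_nsmul _ _ _ fun v _ => le_trans (Finset.card_le_card ?_) (hD v)
  intro e he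
  simp only [mem_filter] at he ⊢
  exact ⟨he.1.1, he.2⟩

theorem le_card_filter_head_mem (E : Finset (V × V)) (S : Finset V) {D : ℕ}
    (hD : ∀ v, D ≤ inDegree E v) : #S * D ≤ #{e ∈ E | e.2 ∈ S} := by
  have h := Finset.card_eq_sum_card_fiberwise (f := Prod.snd) (s := {e ∈ E | e.2 ∈ S}) (t := S)
    (fun e he => by simp at he; exact he.2)
  rw [h, ← smul_eq_mul]
  refine Finset.card_nsmul_le_sum _ _ _ fun v hv => le_trans (hD v) (Finset.card_le_card ?_)
  intro e he
  simp only [mem_filter] at he ⊢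
  exact ⟨⟨he.1, he.2 ▸ hv⟩, he.2⟩

theorem le_card_filter_tail_mem (E : Finset (V × V)) (S : Finset V) {D : ℕ}
    (hD : ∀ v, D ≤ outDegree E v) : #S * D ≤ #{e ∈ E | e.1 ∈ S} := by
  have h := Finset.card_eq_sum_card_fiberwise (f := Prod.fst) (s := {e ∈ E | e.1 ∈ S}) (t := S)
    (fun e he => by simp at he; exact he.2)
  rw [h, ← smul_eq_mul]
  refine Finset.card_nsmul_le_sum _ _ _ fun v hv => le_trans (hD v) (Finset.card_le_card ?_)
  intro e he
  simp only [mem_filter] at he ⊢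
  exact ⟨⟨he.1, he.2 ▸ hv⟩, he.2⟩

/-- Lower bound for the number of switchable pairs with a prescribed first edge. -/
theorem le_card_filter_partner (E : Finset (V × V)) (A B : Finset V) {D : ℕ}
    (hin : ∀ v, inDegree E v ≤ D) (hout : ∀ v, outDegree E v ≤ D) (a b : V) :
    #{e ∈ E | e.2 ∈ B} - edgeCount E A B - 3 * D ^ 2 ≤
      #{e ∈ E | e.1 ∉ A ∧ e.2 ∈ B ∧ (a, e.2) ∉ E ∧ (e.1, b) ∉ E ∧ e.1 ≠ b} := by
  set O : Finset V := {e ∈ E | e.1 = a}.image Prod.snd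
  set I : Finset V := {e ∈ E | e.2 = b}.image Prod.fst
  have hO : #O ≤ D := Finset.card_image_le.trans (hout a)
  have hI : #I ≤ D := Finset.card_image_le.trans (hin b)
  have h1 := (card_filter_head_mem_le E O hin).trans (Nat.mul_le_mul_right D hO)
  have h2 := (card_filter_tail_mem_le E I hout).trans (Nat.mul_le_mul_right D hI)
  have h3 := hout b
  have h4 : D ≤ D * D := Nat.le_mul_self D
  have hcov : {e ∈ E | e.2 ∈ B} ⊆
      {e ∈ E | e.1 ∉ A ∧ e.2 ∈ B ∧ (a, e.2) ∉ E ∧ (e.1, b) ∉ E ∧ e.1 ≠ b} ∪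
        ({e ∈ E | e.1 ∈ A ∧ e.2 ∈ B} ∪ ({e ∈ E | e.2 ∈ O} ∪
          ({e ∈ E | e.1 ∈ I} ∪ {e ∈ E | e.1 = b}))) := by
    intro e he
    simp only [mem_filter, mem_union] at he ⊢
    by_cases c1 : e.1 ∈ A
    · tauto
    by_cases c2 : (a, e.2) ∈ E
    · have : e.2 ∈ O := mem_image.2 ⟨(a, e.2), by simp [c2], rfl⟩
      tauto
    by_cases c3 : (e.1, b) ∈ E
    · have : e.1 ∈ I := mem_image.2 ⟨(e.1, b), by simp [c3], rfl⟩
      tauto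
    tauto
  have h5 := Finset.card_le_card hcov
  have h6 := h5.trans (card_union_le _ _)
  have h7 := card_union_le {e ∈ E | e.1 ∈ A ∧ e.2 ∈ B} ({e ∈ E | e.2 ∈ O} ∪
          ({e ∈ E | e.1 ∈ I} ∪ {e ∈ E | e.1 = b}))
  have h8 := card_union_le {e ∈ E | e.2 ∈ O} ({e ∈ E | e.1 ∈ I} ∪ {e ∈ E | e.1 = b})
  have h9 := card_union_le {e ∈ E | e.1 ∈ I} {e ∈ E | e.1 = b}
  unfold edgeCount
  unfold outDegree at h3
  rw [pow_two]
  omega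

/-- A family of bounded-degree digraphs, each with two marked vertex sets `A E` and `B E`, that is
stable under all switchings creating an edge from `A E` to `B E`. -/
structure SwitchStable (C : Finset (Finset (V × V))) (A B : Finset (V × V) → Finset V)
    (D α β W : ℕ) : Prop where
  inDegree_le : ∀ E ∈ C, ∀ v, inDegree E v ≤ D
  outDegree_le : ∀ E ∈ C, ∀ v, outDegree E v ≤ D
  le_tail : ∀ E ∈ C, α ≤ #{e ∈ E | e.1 ∈ A E}
  le_head : ∀ E ∈ C, β ≤ #{e ∈ E | e.2 ∈ B E}
  card_le : ∀ E ∈ C, #{e ∈ E | e.1 ∉ A E ∧ e.2 ∉ B E} ≤ W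
  switch_mem : ∀ E ∈ C, ∀ q, Switchable E (A E) (B E) q → switchEdges E q ∈ C
  left_eq : ∀ E ∈ C, ∀ q, Switchable E (A E) (B E) q → A (switchEdges E q) = A E
  right_eq : ∀ E ∈ C, ∀ q, Switchable E (A E) (B E) q → B (switchEdges E q) = B E

theorem SwitchStable.step {C : Finset (Finset (V × V))} {A B : Finset (V × V) → Finset V}
    {D α β W : ℕ} (h : SwitchStable C A B D α β W) (i : ℕ) :
    #{E ∈ C | edgeCount E (A E) (B E) = i} * ((α - i) * (β - i - 3 * D ^ 2)) ≤
      #{E ∈ C | edgeCount E (A E) (B E) = i + 1} * ((i + 1) * W) := by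
  classical
  refine card_mul_le_card_mul_of_leftInverse _ _
    (fun E => {q ∈ E ×ˢ E | Switchable E (A E) (B E) q})
    (fun E => E.filter (fun e => e.1 ∈ A E ∧ e.2 ∈ B E) ×ˢ
      E.filter (fun e => e.1 ∉ A E ∧ e.2 ∉ B E))
    (fun s => (switchEdges s.1 s.2, ((s.2.1.1, s.2.2.2), (s.2.2.1, s.2.1.2))))
    (fun s => (switchEdges s.1 s.2, ((s.2.1.1, s.2.2.2), (s.2.2.1, s.2.1.2)))) ?_ ?_ ?_ ?_
  · intro E hE q hq
    simp only [mem_filter, mem_product] at hE hq ⊢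
    obtain ⟨hE, hi⟩ := hE
    have hs := hq.2
    rw [h.left_eq E hE q hs, h.right_eq E hE q hs, hs.edgeCount_eq, hi]
    refine ⟨⟨h.switch_mem E hE q hs, rfl⟩, ⟨?_, hs.tail_mem, hs.head_mem⟩,
      ?_, hs.tail_notMem, hs.head_notMem⟩ <;> simp [mem_switchEdges]
  · intro E hE q hq
    simp only [mem_filter, mem_product] at hE hq ⊢
    rw [hq.2.switchEdges_switchEdges]
  · intro E hE
    simp only [mem_filter] at hE
    obtain ⟨hE, hi⟩ := hE
    have h1 : α - i ≤ #{e ∈ E | e.1 ∈ A E ∧ e.2 ∉ B E} := by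
      have h2 := h.le_tail E hE
      have h3 := Finset.card_filter_add_card_filter_not (s := {e ∈ E | e.1 ∈ A E})
        (fun e => e.2 ∈ B E)
      simp only [filter_filter] at h3
      unfold edgeCount at hi
      omega
    calc (α - i) * (β - i - 3 * D ^ 2)
        ≤ #{e ∈ E | e.1 ∈ A E ∧ e.2 ∉ B E} * (β - i - 3 * D ^ 2) := Nat.mul_le_mul_right _ h1
      _ ≤ ∑ f ∈ {e ∈ E | e.1 ∈ A E ∧ e.2 ∉ B E},
            #{e ∈ E | e.1 ∉ A E ∧ e.2 ∈ B E ∧ (f.1, e.2) ∉ E ∧ (e.1, f.2) ∉ E ∧ e.1 ≠ f.2} := by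
          rw [← smul_eq_mul]
          refine Finset.card_nsmul_le_sum _ _ _ fun f _ => ?_
          have := le_card_filter_partner E (A E) (B E) (h.inDegree_le E hE)
            (h.outDegree_le E hE) f.1 f.2
          have := h.le_head E hE
          omega
      _ = #({e ∈ E | e.1 ∈ A E ∧ e.2 ∉ B E}.sigma fun f =>
            {e ∈ E | e.1 ∉ A E ∧ e.2 ∈ B E ∧ (f.1, e.2) ∉ E ∧ (e.1, f.2) ∉ E ∧ e.1 ≠ f.2}) :=
          (Finset.card_sigma _ _).symm
      _ ≤ _ := by
          refine Finset.card_le_card_of_injOn (fun s => (s.1, s.2)) ?_ ?_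
          · rintro ⟨f, e⟩ hs
            simp only [coe_sigma, Set.mem_sigma_iff, mem_coe, mem_filter, mem_product] at hs ⊢
            obtain ⟨⟨a1, a2, a3⟩, a4, a5, a6, a7, a8, a9⟩ := hs
            exact ⟨⟨a1, a4⟩, ⟨a1, a4, a2, a3, a5, a6, a7, a8, a9⟩⟩
          · rintro ⟨f, e⟩ _ ⟨f', e'⟩ _ h
            simpa using h
  · intro E hE
    simp only [mem_filter] at hE
    rw [Finset.card_product]
    exact Nat.mul_le_mul hE.2.le (h.card_le E hE.1)

theorem SwitchStable.card_mul_choose_mul_pow_le {C : Finset (Finset (V × V))}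
    {A B : Finset (V × V) → Finset V} {D α β W : ℕ} (h : SwitchStable C A B D α β W) (j H : ℕ)
    (hH : H + j + 3 * D ^ 2 ≤ β) :
    #{E ∈ C | edgeCount E (A E) (B E) = 0} * (α.choose j * H ^ j) ≤ #C * W ^ j := by
  have key : ∀ i ≤ j, #{E ∈ C | edgeCount E (A E) (B E) = 0} * (α.descFactorial i * H ^ i) ≤
      #{E ∈ C | edgeCount E (A E) (B E) = i} * (i.factorial * W ^ i) := by
    intro i
    induction i with
    | zero => simp
    | succ i ih =>
      intro hi
      have h1 := ih (by omega)
      have h2 := h.step i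
      have h3 : H ≤ β - i - 3 * D ^ 2 := by omega
      rw [Nat.descFactorial_succ, Nat.factorial_succ]
      calc _ = (#{E ∈ C | edgeCount E (A E) (B E) = 0} * (α.descFactorial i * H ^ i)) *
            ((α - i) * H) := by ring
        _ ≤ (#{E ∈ C | edgeCount E (A E) (B E) = i} * (i.factorial * W ^ i)) *
            ((α - i) * (β - i - 3 * D ^ 2)) := by gcongr
        _ = (#{E ∈ C | edgeCount E (A E) (B E) = i} * ((α - i) * (β - i - 3 * D ^ 2))) *
            (i.factorial * W ^ i) := by ring
        _ ≤ (#{E ∈ C | edgeCount E (A E) (B E) = i + 1} * ((i + 1) * W)) *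
            (i.factorial * W ^ i) := by gcongr
        _ = _ := by ring
  have h1 := key j le_rfl
  have h2 : #{E ∈ C | edgeCount E (A E) (B E) = j} ≤ #C := Finset.card_filter_le _ _
  rw [Nat.descFactorial_eq_factorial_mul_choose] at h1
  refine Nat.le_of_mul_le_mul_left (c := j.factorial) ?_ j.factorial_pos
  calc _ = #{E ∈ C | edgeCount E (A E) (B E) = 0} * (j.factorial * α.choose j * H ^ j) := by ring
    _ ≤ _ := h1
    _ ≤ #C * (j.factorial * W ^ j) := by gcongr
    _ = _ := by ring

end Switching

section Dicores

variable {k1 k2 N M : ℕ}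

open Classical in
/-- The finite set of all `(k1,k2)`-dicores on `Fin N` with `M` edges. -/
noncomputable def dicores (k1 k2 N M : ℕ) : Finset (Finset (Fin N × Fin N)) :=
  {E | IsDicore k1 k2 N M E}

theorem mem_dicores {E : Finset (Fin N × Fin N)} :
    E ∈ dicores k1 k2 N M ↔ IsDicore k1 k2 N M E := by
  simp [dicores]

theorem card_inDegree_step (v : Fin N) (d : ℕ) (hd : k1 ≤ d) :
    #{E ∈ dicores k1 k2 N M | d + 1 ≤ inDegree E v} * ((d + 1) * (N - 1) - M) ≤
      #{E ∈ dicores k1 k2 N M | d ≤ inDegree E v} * M := by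
  set I : Finset (Fin N × Fin N) → Finset (Fin N) :=
    fun E => (E.filter fun e => e.2 = v).image Prod.fst with hI
  have memI : ∀ E a, a ∈ I E ↔ (a, v) ∈ E := by
    intro E a
    simp only [hI, mem_image, mem_filter]
    exact ⟨by rintro ⟨⟨x, y⟩, ⟨h1, rfl⟩, rfl⟩; exact h1, fun h => ⟨(a, v), ⟨h, rfl⟩, rfl⟩⟩
  have cardI : ∀ E, #(I E) = inDegree E v := by
    intro E
    refine Finset.card_image_of_injOn ?_
    rintro ⟨a, b⟩ h ⟨a', b'⟩ h' h''
    simp only [coe_filter, Set.mem_ofPred_eq] at h h' h''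
    simp [h'', h.2, h'.2]
  refine card_mul_le_card_mul_of_leftInverse _ _
    (fun E => (I E ×ˢ univ) \ (E ∪ (I E).image fun a => (a, a)))
    (fun E => E)
    (fun s => (insert s.2 (s.1.erase (s.2.1, v)), s.2))
    (fun s => (insert (s.2.1, v) (s.1.erase s.2), s.2)) ?_ ?_ ?_ ?_
  · rintro E hE ⟨a, w⟩ hq
    simp only [mem_filter, mem_dicores, mem_sdiff, mem_union, mem_product, mem_univ, and_true,
      mem_image, not_or, memI] at hE hq ⊢
    obtain ⟨⟨hM, hl, hdeg⟩, hv⟩ := hE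
    obtain ⟨hav, haw, hne⟩ := hq
    have hne : a ≠ w := fun h => hne ⟨a, hav, by rw [h]⟩
    have hwv : w ≠ v := fun h => haw (h ▸ hav)
    have hv' : d ≤ inDegree (insert (a, w) (E.erase (a, v))) v := by
      have : {e ∈ E | e.2 = v}.erase (a, v) ⊆
          {e ∈ insert (a, w) (E.erase (a, v)) | e.2 = v} := by
        intro e he
        simp only [mem_erase, mem_filter, mem_insert] at he ⊢
        tauto
      have h1 := Finset.card_le_card this
      have h2 := Finset.pred_card_le_card_erase (s := {e ∈ E | e.2 = v}) (a := (a, v))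
      unfold inDegree at hv ⊢
      omega
    refine ⟨⟨⟨?_, ?_, ?_⟩, hv'⟩, by simp⟩
    · rw [Finset.card_insert_of_notMem (by simp [haw]), Finset.card_erase_of_mem hav, hM]
      have := Finset.card_pos.2 ⟨_, hav⟩
      omega
    · intro e he
      rcases mem_insert.1 he with rfl | he
      · exact hne
      · exact hl e (mem_of_mem_erase he)
    · intro u
      constructor
      · by_cases hu : u = v
        · subst hu; exact hd.trans hv'
        · refine (hdeg u).1.trans (Finset.card_le_card ?_)
          intro e he
          simp only [mem_filter, mem_insert, mem_erase] at he ⊢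
          refine ⟨Or.inr ⟨?_, he.1⟩, he.2⟩
          rintro rfl
          exact hu he.2.symm
      · refine (hdeg u).2.trans (le_of_eq ?_)
        by_cases hu : a = u
        · subst hu
          rw [Finset.filter_insert, if_pos rfl, Finset.filter_erase,
            Finset.card_insert_of_notMem (by simp [haw]),
            Finset.card_erase_of_mem (by simp [hav])]
          have : 0 < #{e ∈ E | e.1 = a} := Finset.card_pos.2 ⟨(a, v), by simp [hav]⟩
          omega
        · rw [Finset.filter_insert, if_neg hu, Finset.filter_erase, Finset.erase_eq_of_notMem]
          simp [hu]
  · rintro E hE ⟨a, w⟩ hq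
    simp only [mem_sdiff, mem_union, mem_product, mem_univ, and_true, not_or, memI] at hq
    simp only [Prod.mk.injEq, and_true]
    rw [Finset.erase_insert (by simp [hq.2.1]), Finset.insert_erase hq.1]
  · intro E hE
    simp only [mem_filter, mem_dicores] at hE
    obtain ⟨⟨hM, -, -⟩, hv⟩ := hE
    have h1 := Finset.le_card_sdiff (E ∪ (I E).image fun a => (a, a)) (I E ×ˢ univ)
    have h2 := card_union_le E ((I E).image fun a => (a, a))
    have h3 := card_image_le (s := I E) (f := fun a => (a, a))
    rw [card_product, card_univ, Fintype.card_fin] at h1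
    have h4 : (d + 1) * (N - 1) ≤ #(I E) * (N - 1) :=
      Nat.mul_le_mul_right _ (by rw [cardI]; exact hv)
    have h5 : #(I E) * (N - 1) = #(I E) * N - #(I E) := by rw [Nat.mul_sub, mul_one]
    omega
  · intro E hE
    simp only [mem_filter, mem_dicores] at hE
    exact hE.1.1.le

theorem card_inDegree_mul_pow_le (v : Fin N) {d U : ℕ} (hd : k1 ≤ d)
    (hU : U + M ≤ (d + 1) * (N - 1)) (j : ℕ) :
    #{E ∈ dicores k1 k2 N M | d + j ≤ inDegree E v} * U ^ j ≤ #(dicores k1 k2 N M) * M ^ j := by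
  induction j with
  | zero => simpa using Finset.card_filter_le _ _
  | succ j ih =>
    have h1 := card_inDegree_step (k1 := k1) (k2 := k2) (M := M) v (d + j) (by omega)
    have h2 : U ≤ (d + j + 1) * (N - 1) - M := by
      have : (d + 1) * (N - 1) ≤ (d + j + 1) * (N - 1) := Nat.mul_le_mul_right _ (by omega)
      omega
    calc _ = #{E ∈ dicores k1 k2 N M | d + j + 1 ≤ inDegree E v} * U * U ^ j := by ring_nf
      _ ≤ #{E ∈ dicores k1 k2 N M | d + j + 1 ≤ inDegree E v} *
          ((d + j + 1) * (N - 1) - M) * U ^ j := by gcongr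
      _ ≤ #{E ∈ dicores k1 k2 N M | d + j ≤ inDegree E v} * M * U ^ j := by gcongr
      _ = #{E ∈ dicores k1 k2 N M | d + j ≤ inDegree E v} * U ^ j * M := by ring
      _ ≤ #(dicores k1 k2 N M) * M ^ j * M := by gcongr
      _ = _ := by ring

/-- The dicores in which all in- and out-degrees are at most `D`. -/
noncomputable def boundedDicores (k1 k2 N M D : ℕ) : Finset (Finset (Fin N × Fin N)) :=
  {E ∈ dicores k1 k2 N M | ∀ v, inDegree E v ≤ D ∧ outDegree E v ≤ D}

theorem mem_boundedDicores {D : ℕ} {E : Finset (Fin N × Fin N)} :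
    E ∈ boundedDicores k1 k2 N M D ↔
      IsDicore k1 k2 N M E ∧ ∀ v, inDegree E v ≤ D ∧ outDegree E v ≤ D := by
  simp [boundedDicores, mem_dicores]

theorem switchEdges_mem_boundedDicores {D : ℕ} {E : Finset (Fin N × Fin N)} {A B : Finset (Fin N)}
    (hAB : Disjoint A B) (hE : E ∈ boundedDicores k1 k2 N M D)
    {q : (Fin N × Fin N) × (Fin N × Fin N)} (hq : Switchable E A B q) :
    switchEdges E q ∈ boundedDicores k1 k2 N M D := by
  rw [mem_boundedDicores] at hE ⊢
  obtain ⟨⟨h1, h2, h3⟩, h4⟩ := hE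
  refine ⟨⟨hq.card_eq.trans h1, ?_, fun v => ⟨?_, ?_⟩⟩, fun v => ⟨?_, ?_⟩⟩
  · intro e he
    rcases mem_switchEdges.1 he with h | rfl | rfl
    · exact h2 e h.1
    · exact fun h : q.1.1 = q.2.2 =>
        Finset.disjoint_left.1 hAB hq.tail_mem (h ▸ hq.head_mem)
    · exact hq.not_loop
  · exact (h3 v).1.trans (hq.inDegree_eq v).ge
  · exact (h3 v).2.trans (hq.outDegree_eq v).ge
  · exact (hq.inDegree_eq v).trans_le (h4 v).1
  · exact (hq.outDegree_eq v).trans_le (h4 v).2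

theorem card_boundedDicores_le (D : ℕ) :
    #(boundedDicores k1 k2 N M D) ≤ #(dicores k1 k2 N M) := Finset.card_filter_le _ _

theorem card_confined_mul_pow_le {D k H : ℕ} (hk : k ≤ k2) {P R : Finset (Fin N)} (hPR : P ⊆ R)
    (hH : H + #P * k + 3 * D ^ 2 + #R * D ≤ M) :
    #{E ∈ boundedDicores k1 k2 N M D | edgeCount E P Rᶜ = 0} * H ^ (#P * k) ≤
      #(dicores k1 k2 N M) * (#R * D) ^ (#P * k) := by
  have hdisj : Disjoint P Rᶜ := by
    rw [Finset.disjoint_left]; intro x hx; simpa using hPR hx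
  have hst : SwitchStable (boundedDicores k1 k2 N M D) (fun _ => P) (fun _ => Rᶜ) D (#P * k)
      (M - #R * D) (#R * D) := by
    refine ⟨?_, ?_, ?_, ?_, ?_, ?_, fun _ _ _ _ => rfl, fun _ _ _ _ => rfl⟩
    · exact fun E hE v => ((mem_boundedDicores.1 hE).2 v).1
    · exact fun E hE v => ((mem_boundedDicores.1 hE).2 v).2
    · intro E hE
      exact le_card_filter_tail_mem E P fun v =>
        hk.trans ((mem_boundedDicores.1 hE).1.2.2 v).2
    · intro E hE
      have h1 := card_filter_head_mem_le E R fun v => ((mem_boundedDicores.1 hE).2 v).1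
      have h2 := Finset.card_filter_add_card_filter_not (s := E) (fun e => e.2 ∈ R)
      have h3 := (mem_boundedDicores.1 hE).1.1
      simp only [mem_compl]
      omega
    · intro E hE
      refine le_trans (Finset.card_le_card ?_)
        (card_filter_head_mem_le E R fun v => ((mem_boundedDicores.1 hE).2 v).1)
      intro e he
      simp only [mem_filter, mem_compl, not_not] at he ⊢
      exact ⟨he.1, he.2.2⟩
    · exact fun E hE q hq => switchEdges_mem_boundedDicores hdisj hE hq
  have h := hst.card_mul_choose_mul_pow_le (#P * k) H (by omega)
  rw [Nat.choose_self, one_mul] at h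
  exact h.trans (Nat.mul_le_mul_right _ (card_boundedDicores_le D))

/-- Some `p` vertices send all their out-edges into a set of `r` vertices containing them. -/
def HasConfined (E : Finset (Fin N × Fin N)) (p r : ℕ) : Prop :=
  ∃ R P : Finset (Fin N), #R = r ∧ P ⊆ R ∧ #P = p ∧ edgeCount E P Rᶜ = 0

open Classical in
theorem card_hasConfined_mul_pow_le {D k H p r : ℕ} (hk : k ≤ k2)
    (hH : H + p * k + 3 * D ^ 2 + r * D ≤ M) :
    #{E ∈ boundedDicores k1 k2 N M D | HasConfined E p r} * H ^ (p * k) ≤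
      N.choose r * r.choose p * (#(dicores k1 k2 N M) * (r * D) ^ (p * k)) := by
  set T := (powersetCard r (univ : Finset (Fin N))).sigma fun R => powersetCard p R with hT
  have hTcard : #T = N.choose r * r.choose p := by
    rw [hT, card_sigma, Finset.sum_congr rfl (g := fun _ => r.choose p)]
    · simp
    · intro R hR
      rw [card_powersetCard, (mem_powersetCard.1 hR).2]
  have hsub : {E ∈ boundedDicores k1 k2 N M D | HasConfined E p r} ⊆
      T.biUnion fun s => {E ∈ boundedDicores k1 k2 N M D | edgeCount E s.2 s.1ᶜ = 0} := by
    intro E hE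
    obtain ⟨hE, R, P, h1, h2, h3, h4⟩ := mem_filter.1 hE
    exact mem_biUnion.2 ⟨⟨R, P⟩, by simp [hT, mem_powersetCard, h1, h2, h3],
      mem_filter.2 ⟨hE, h4⟩⟩
  calc _ ≤ (∑ s ∈ T, #{E ∈ boundedDicores k1 k2 N M D | edgeCount E s.2 s.1ᶜ = 0}) *
        H ^ (p * k) := by
        gcongr
        exact (card_le_card hsub).trans card_biUnion_le
    _ = ∑ s ∈ T, #{E ∈ boundedDicores k1 k2 N M D | edgeCount E s.2 s.1ᶜ = 0} *
        H ^ (p * k) := Finset.sum_mul _ _ _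
    _ ≤ ∑ s ∈ T, #(dicores k1 k2 N M) * (r * D) ^ (p * k) := by
        refine Finset.sum_le_sum fun s hs => ?_
        simp only [hT, mem_sigma, mem_powersetCard, subset_univ, true_and] at hs
        obtain ⟨h1, h2, h3⟩ := hs
        have := card_confined_mul_pow_le (k1 := k1) (M := M) (D := D) (H := H) hk h2
          (by rw [h1, h3]; exact hH)
        rwa [h1, h3] at this
    _ = _ := by rw [sum_const, smul_eq_mul, hTcard]

end Dicores

section Exploration

variable {V : Type*} [DecidableEq V]

/-- The digraph with all edges reversed. -/
def reverseEdges (E : Finset (V × V)) : Finset (V × V) := E.image Prod.swap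

theorem mem_reverseEdges {E : Finset (V × V)} {a b : V} :
    (a, b) ∈ reverseEdges E ↔ (b, a) ∈ E := by
  simp [reverseEdges]

theorem reverseEdges_reverseEdges (E : Finset (V × V)) : reverseEdges (reverseEdges E) = E := by
  ext ⟨a, b⟩; simp [mem_reverseEdges]

theorem card_filter_reverseEdges (E : Finset (V × V)) (p : V × V → Prop) [DecidablePred p] :
    #{e ∈ reverseEdges E | p e} = #{e ∈ E | p e.swap} := by
  rw [reverseEdges, Finset.filter_image, Finset.card_image_of_injective _ Prod.swap_injective]

theorem inDegree_reverseEdges (E : Finset (V × V)) (v : V) :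
    inDegree (reverseEdges E) v = outDegree E v := card_filter_reverseEdges E _

theorem outDegree_reverseEdges (E : Finset (V × V)) (v : V) :
    outDegree (reverseEdges E) v = inDegree E v := card_filter_reverseEdges E _

/-- The set `P`, the root `u` and all out-neighbours of `P`. -/
def outClosure (E : Finset (V × V)) (u : V) (P : Finset V) : Finset V :=
  insert u (P ∪ {e ∈ E | e.1 ∈ P}.image Prod.snd)

theorem mem_outClosure {E : Finset (V × V)} {u : V} {P : Finset V} {b : V} :
    b ∈ outClosure E u P ↔ b = u ∨ b ∈ P ∨ ∃ a ∈ P, (a, b) ∈ E := by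
  simp only [outClosure, mem_insert, mem_union, mem_image, mem_filter, Prod.exists,
    exists_eq_right]
  grind

open Classical in
/-- Add to `P` an arbitrary element of `S \ P` if there is one. -/
noncomputable def insertNew (S P : Finset V) : Finset V :=
  if h : (S \ P).Nonempty then insert h.choose P else P

/-- The set of the first `n` vertices processed by a deterministic exploration from `u` along
out-edges. -/
noncomputable def explore (E : Finset (V × V)) (u : V) : ℕ → Finset V
  | 0 => ∅
  | n + 1 => insertNew (outClosure E u (explore E u n)) (explore E u n)

theorem subset_insertNew (S P : Finset V) : P ⊆ insertNew S P := by
  unfold insertNew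
  split_ifs
  · exact subset_insert _ _
  · exact Subset.rfl

theorem insertNew_subset (S P : Finset V) : insertNew S P ⊆ S ∪ P := by
  unfold insertNew
  split_ifs with h
  · refine insert_subset (mem_union_left _ (mem_sdiff.1 h.choose_spec).1) subset_union_right
  · exact subset_union_right

theorem card_insertNew {S P : Finset V} (h : (S \ P).Nonempty) : #(insertNew S P) = #P + 1 := by
  rw [insertNew, dif_pos h, card_insert_of_notMem (mem_sdiff.1 h.choose_spec).2]

theorem outClosure_congr {E E' : Finset (V × V)} {u : V} {P : Finset V}
    (h : ∀ a ∈ P, ∀ b, (a, b) ∈ E' ↔ (a, b) ∈ E) : outClosure E' u P = outClosure E u P := by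
  ext b
  simp only [mem_outClosure]
  grind

theorem explore_congr {E E' : Finset (V × V)} {u : V} (n : ℕ)
    (h : ∀ a ∈ explore E u n, ∀ b, (a, b) ∈ E' ↔ (a, b) ∈ E) :
    explore E' u n = explore E u n := by
  induction n with
  | zero => rfl
  | succ n ih =>
    have h' : ∀ a ∈ explore E u n, ∀ b, (a, b) ∈ E' ↔ (a, b) ∈ E :=
      fun a ha => h a (subset_insertNew _ _ ha)
    rw [explore, explore, ih h', outClosure_congr h']

theorem reachable_of_mem_explore {E : Finset (V × V)} {u : V} (n : ℕ) :
    ∀ b ∈ outClosure E u (explore E u n), Relation.ReflTransGen (fun a b => (a, b) ∈ E) u b := by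
  have key : ∀ P : Finset V, (∀ a ∈ P, Relation.ReflTransGen (fun a b => (a, b) ∈ E) u a) →
      ∀ b ∈ outClosure E u P, Relation.ReflTransGen (fun a b => (a, b) ∈ E) u b := by
    intro P hP b hb
    rcases mem_outClosure.1 hb with rfl | hb | ⟨a, ha, hab⟩
    · exact .refl
    · exact hP b hb
    · exact (hP a ha).tail hab
  apply key
  induction n with
  | zero => simp [explore]
  | succ n ih =>
    intro a ha
    rcases mem_union.1 (insertNew_subset _ _ ha) with h | h
    · exact key _ ih a h
    · exact ih a h

theorem card_explore {E : Finset (V × V)} {u : V} {n : ℕ}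
    (h : ∀ P : Finset V, P.Nonempty → #P < n → ∃ a ∈ P, ∃ b ∉ P, (a, b) ∈ E) :
    #(explore E u n) = n := by
  suffices ∀ i ≤ n, #(explore E u i) = i from this n le_rfl
  intro i
  induction i with
  | zero => simp [explore]
  | succ i ih =>
    intro hi
    have h1 := ih (by omega)
    rw [explore, card_insertNew, h1]
    by_cases hu : u ∈ explore E u i
    · obtain ⟨a, ha, b, hb, hab⟩ := h _ ⟨u, hu⟩ (by omega)
      exact ⟨b, mem_sdiff.2 ⟨mem_outClosure.2 (Or.inr (Or.inr ⟨a, ha, hab⟩)), hb⟩⟩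
    · exact ⟨u, mem_sdiff.2 ⟨mem_outClosure.2 (Or.inl rfl), hu⟩⟩

/-- The vertices discovered in the first `n` steps of the exploration from `u`. -/
noncomputable def discovered (E : Finset (V × V)) (u : V) (n : ℕ) : Finset V :=
  outClosure E u (explore E u n)

/-- The vertices discovered but not processed in the first `n` steps of the exploration. -/
noncomputable def explorationFrontier (E : Finset (V × V)) (u : V) (n : ℕ) : Finset V :=
  discovered E u n \ explore E u n

theorem explore_subset_discovered (E : Finset (V × V)) (u : V) (n : ℕ) :
    explore E u n ⊆ discovered E u n :=
  fun _ h => mem_outClosure.2 (Or.inr (Or.inl h))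

theorem discovered_congr {E E' : Finset (V × V)} {u : V} (n : ℕ)
    (h : ∀ a ∈ explore E u n, ∀ b, (a, b) ∈ E' ↔ (a, b) ∈ E) :
    discovered E' u n = discovered E u n := by
  rw [discovered, explore_congr n h, outClosure_congr h, discovered]

theorem explorationFrontier_congr {E E' : Finset (V × V)} {u : V} (n : ℕ)
    (h : ∀ a ∈ explore E u n, ∀ b, (a, b) ∈ E' ↔ (a, b) ∈ E) :
    explorationFrontier E' u n = explorationFrontier E u n := by
  rw [explorationFrontier, discovered_congr n h, explore_congr n h, explorationFrontier]

end Exploration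

section Connection

variable {k1 k2 N M : ℕ}

theorem isDicore_reverseEdges {E : Finset (Fin N × Fin N)} :
    IsDicore k2 k1 N M (reverseEdges E) ↔ IsDicore k1 k2 N M E := by
  have key : ∀ {k1 k2 : ℕ} {E : Finset (Fin N × Fin N)}, IsDicore k1 k2 N M E →
      IsDicore k2 k1 N M (reverseEdges E) := by
    intro k1 k2 E hE
    refine ⟨?_, ?_, fun v => ⟨?_, ?_⟩⟩
    · rw [reverseEdges, Finset.card_image_of_injective _ Prod.swap_injective, hE.1]
    · rintro ⟨a, b⟩ he
      exact (hE.2.1 _ (mem_reverseEdges.1 he)).symm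
    · exact (hE.2.2 v).2.trans (inDegree_reverseEdges E v).ge
    · exact (hE.2.2 v).1.trans (outDegree_reverseEdges E v).ge
  exact ⟨fun h => reverseEdges_reverseEdges E ▸ key h, key⟩

open Classical in
theorem card_filter_dicores_reverseEdges (Q : Finset (Fin N × Fin N) → Prop) :
    #{E ∈ dicores k1 k2 N M | Q (reverseEdges E)} = #{E ∈ dicores k2 k1 N M | Q E} := by
  refine Finset.card_bij' (fun E _ => reverseEdges E) (fun E _ => reverseEdges E) ?_ ?_ ?_ ?_
  · intro E hE
    rw [mem_filter, mem_dicores] at hE ⊢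
    exact ⟨isDicore_reverseEdges.2 hE.1, hE.2⟩
  · intro E hE
    rw [mem_filter, mem_dicores] at hE ⊢
    rw [reverseEdges_reverseEdges]
    exact ⟨isDicore_reverseEdges.2 hE.1, hE.2⟩
  · exact fun E _ => reverseEdges_reverseEdges E
  · exact fun E _ => reverseEdges_reverseEdges E

theorem card_dicores_comm : #(dicores k1 k2 N M) = #(dicores k2 k1 N M) := by
  classical
  simpa using card_filter_dicores_reverseEdges (k1 := k1) (k2 := k2) (M := M) (N := N)
    (fun _ => True)

theorem reverseEdges_mem_boundedDicores {D : ℕ} {E : Finset (Fin N × Fin N)}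
    (hE : E ∈ boundedDicores k1 k2 N M D) : reverseEdges E ∈ boundedDicores k2 k1 N M D := by
  rw [mem_boundedDicores] at hE ⊢
  refine ⟨isDicore_reverseEdges.2 hE.1, fun v => ?_⟩
  rw [inDegree_reverseEdges, outDegree_reverseEdges]
  exact (hE.2 v).symm

/-- The explorations of `E` along out-edges from `u` and along in-edges to `v` have not met after
`n` steps, and both frontiers have at least `m` vertices. -/
def SeparatedExplorations (E : Finset (Fin N × Fin N)) (u v : Fin N) (n m : ℕ) : Prop :=
  Disjoint (discovered E u n) (discovered (reverseEdges E) v n) ∧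
    m ≤ #(explorationFrontier E u n) ∧ m ≤ #(explorationFrontier (reverseEdges E) v n)

open Classical in
theorem card_separated_mul_le {D k : ℕ} (hk1 : k ≤ k1) (hk2 : k ≤ k2) (u v : Fin N) (n m j H : ℕ)
    (hH : H + j + 3 * D ^ 2 ≤ m * k) :
    #{E ∈ boundedDicores k1 k2 N M D | SeparatedExplorations E u v n m ∧
        edgeCount E (explorationFrontier E u n) (explorationFrontier (reverseEdges E) v n) = 0} *
      ((m * k).choose j * H ^ j) ≤ #(dicores k1 k2 N M) * M ^ j := by
  have hinv : ∀ E, SeparatedExplorations E u v n m → ∀ q,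
      Switchable E (explorationFrontier E u n) (explorationFrontier (reverseEdges E) v n) q →
      (∀ a ∈ explore E u n, ∀ b, (a, b) ∈ switchEdges E q ↔ (a, b) ∈ E) ∧
      (∀ a ∈ explore (reverseEdges E) v n, ∀ b,
        (a, b) ∈ reverseEdges (switchEdges E q) ↔ (a, b) ∈ reverseEdges E) := by
    rintro E ⟨hdisj, -, -⟩ ⟨⟨a, b⟩, ⟨c, d⟩⟩ hq
    obtain ⟨h1, h2, h3, h4, h5, h6, h7, h8, h9⟩ := hq
    simp only at *
    rw [explorationFrontier, mem_sdiff] at h3 h6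
    have hc : c ∉ explore E u n := fun hc => Finset.disjoint_left.1 hdisj
      (mem_outClosure.2 (Or.inr (Or.inr ⟨c, hc, h2⟩))) h6.1
    have hb : b ∉ explore (reverseEdges E) v n := fun hb => Finset.disjoint_left.1 hdisj h3.1
      (mem_outClosure.2 (Or.inr (Or.inr ⟨b, hb, mem_reverseEdges.2 h1⟩)))
    constructor
    · intro x hx y
      have hxa : x ≠ a := fun h => h3.2 (h ▸ hx)
      have hxc : x ≠ c := fun h => hc (h ▸ hx)
      simp [mem_switchEdges, hxa, hxc]
    · intro x hx y
      have hxd : x ≠ d := fun h => h6.2 (h ▸ hx)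
      have hxb : x ≠ b := fun h => hb (h ▸ hx)
      simp [mem_reverseEdges, mem_switchEdges, hxd, hxb]
  set C := {E ∈ boundedDicores k1 k2 N M D | SeparatedExplorations E u v n m} with hC
  have hst : SwitchStable C (fun E => explorationFrontier E u n) (fun E => explorationFrontier (reverseEdges E) v n)
      D (m * k) (m * k) M := by
    refine ⟨?_, ?_, ?_, ?_, ?_, ?_, ?_, ?_⟩
    · exact fun E hE w => ((mem_boundedDicores.1 (mem_filter.1 hE).1).2 w).1
    · exact fun E hE w => ((mem_boundedDicores.1 (mem_filter.1 hE).1).2 w).2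
    · intro E hE
      obtain ⟨hE, hs⟩ := mem_filter.1 hE
      exact (Nat.mul_le_mul_right _ hs.2.1).trans (le_card_filter_tail_mem E _ fun w =>
        hk2.trans ((mem_boundedDicores.1 hE).1.2.2 w).2)
    · intro E hE
      obtain ⟨hE, hs⟩ := mem_filter.1 hE
      exact (Nat.mul_le_mul_right _ hs.2.2).trans (le_card_filter_head_mem E _ fun w =>
        hk1.trans ((mem_boundedDicores.1 hE).1.2.2 w).1)
    · intro E hE
      exact (Finset.card_filter_le _ _).trans (mem_boundedDicores.1 (mem_filter.1 hE).1).1.1.le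
    · intro E hE q hq
      obtain ⟨hE, hs⟩ := mem_filter.1 hE
      obtain ⟨i1, i2⟩ := hinv E hs q hq
      refine mem_filter.2 ⟨switchEdges_mem_boundedDicores ?_ hE hq, ?_⟩
      · exact hs.1.mono sdiff_subset sdiff_subset
      · rw [SeparatedExplorations, discovered_congr n i1, discovered_congr n i2,
          explorationFrontier_congr n i1, explorationFrontier_congr n i2]
        exact hs
    · exact fun E hE q hq => explorationFrontier_congr n (hinv E (mem_filter.1 hE).2 q hq).1
    · exact fun E hE q hq => explorationFrontier_congr n (hinv E (mem_filter.1 hE).2 q hq).2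
  have h := hst.card_mul_choose_mul_pow_le j H hH
  rw [hC, filter_filter] at h
  refine h.trans (Nat.mul_le_mul_right _ ?_)
  exact (Finset.card_filter_le _ _).trans (card_boundedDicores_le D)

theorem exists_edge_of_not_hasConfined {E : Finset (Fin N × Fin N)} {P R : Finset (Fin N)}
    (hPR : P ⊆ R) (h : ¬ HasConfined E #P #R) : ∃ a ∈ P, ∃ b ∉ R, (a, b) ∈ E := by
  by_contra! hc
  refine h ⟨R, P, rfl, hPR, rfl, ?_⟩
  rw [edgeCount, card_eq_zero, filter_eq_empty_iff]
  rintro ⟨a, b⟩ he ⟨ha, hb⟩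
  exact hc a ha b (mem_compl.1 hb) he

theorem le_card_explorationFrontier {E : Finset (Fin N × Fin N)} {m : ℕ} (u : Fin N) (hN : 3 * m ≤ N)
    (hclosed : ∀ r, 0 < r → r < 2 * m → ¬ HasConfined E r r)
    (hexp : ¬ HasConfined E (2 * m) (3 * m)) : m ≤ #(explorationFrontier E u (2 * m)) := by
  have h1 : #(explore E u (2 * m)) = 2 * m := by
    refine card_explore fun P hP hlt => ?_
    exact exists_edge_of_not_hasConfined Subset.rfl (hclosed _ (card_pos.2 hP) hlt)
  by_contra! hlt
  have hsub := explore_subset_discovered E u (2 * m)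
  rw [explorationFrontier, card_sdiff_of_subset hsub, h1] at hlt
  obtain ⟨R, hR, -, hRcard⟩ := Finset.exists_subsuperset_card_eq
    (s := discovered E u (2 * m)) (t := univ) (n := 3 * m) (subset_univ _) (by omega)
    (by simpa using hN)
  obtain ⟨a, ha, b, hb, hab⟩ := exists_edge_of_not_hasConfined (E := E) (hsub.trans hR)
    (by rwa [h1, hRcard])
  exact hb (hR (mem_outClosure.2 (Or.inr (Or.inr ⟨a, ha, hab⟩))))

theorem exists_separated_of_not_stronglyConnected {E : Finset (Fin N × Fin N)} {m : ℕ}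
    (hN : 3 * m ≤ N) (hE : ¬ StronglyConnected E)
    (h1 : ∀ r, 0 < r → r < 2 * m → ¬ HasConfined E r r)
    (h2 : ¬ HasConfined E (2 * m) (3 * m))
    (h3 : ∀ r, 0 < r → r < 2 * m → ¬ HasConfined (reverseEdges E) r r)
    (h4 : ¬ HasConfined (reverseEdges E) (2 * m) (3 * m)) :
    ∃ u v, SeparatedExplorations E u v (2 * m) m ∧
      edgeCount E (explorationFrontier E u (2 * m)) (explorationFrontier (reverseEdges E) v (2 * m)) = 0 := by
  unfold StronglyConnected at hE
  push Not at hE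
  obtain ⟨u, v, huv⟩ := hE
  have hr : ∀ b ∈ discovered (reverseEdges E) v (2 * m),
      Relation.ReflTransGen (fun a b => (a, b) ∈ E) b v := by
    intro b hb
    have := reachable_of_mem_explore _ b hb
    rw [← Relation.reflTransGen_swap] at this
    exact Relation.ReflTransGen.mono (fun x y hxy => mem_reverseEdges.1 hxy) _ _ this
  refine ⟨u, v, ⟨?_, le_card_explorationFrontier u hN h1 h2, le_card_explorationFrontier v hN h3 h4⟩, ?_⟩
  · rw [Finset.disjoint_left]
    intro b hb hb'
    exact huv ((reachable_of_mem_explore _ b hb).trans (hr b hb'))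
  · rw [edgeCount, card_eq_zero, filter_eq_empty_iff]
    rintro ⟨a, b⟩ he ⟨ha, hb⟩
    exact huv (((reachable_of_mem_explore _ a (mem_sdiff.1 ha).1).tail he).trans
      (hr b (mem_sdiff.1 hb).1))

theorem not_hasConfined_self {E : Finset (Fin N × Fin N)} (hE : IsDicore k1 k2 N M E) {r : ℕ}
    (hr : 0 < r) (hrk : r ≤ k2) : ¬ HasConfined E r r := by
  rintro ⟨R, P, hR, hPR, hP, h0⟩
  obtain ⟨a, ha⟩ := card_pos.1 (hP ▸ hr : 0 < #P)
  have hPR' : P = R := eq_of_subset_of_card_le hPR (by omega)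
  have hsub : {e ∈ E | e.1 = a} ⊆ (P.erase a).image fun b => (a, b) := by
    rintro ⟨x, b⟩ he
    obtain ⟨hxE, rfl⟩ := mem_filter.1 he
    simp only [mem_image, mem_erase, Prod.mk.injEq, true_and, exists_eq_right]
    refine ⟨fun h => hE.2.1 (x, b) hxE h.symm, ?_⟩
    by_contra hb
    rw [edgeCount, card_eq_zero, filter_eq_empty_iff] at h0
    exact h0 hxE ⟨ha, by simpa [← hPR'] using hb⟩
  have h1 := (hE.2.2 a).2.trans ((card_le_card hsub).trans card_image_le)
  rw [card_erase_of_mem ha] at h1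
  omega

end Connection

section Estimates

variable {k1 k2 k : ℕ} {C1 : ℝ}

/-- `N` equals `x ^ 32`, and `M` is of the order of `N`. -/
structure EdgeScale (C1 : ℝ) (N M : ℕ) (x : ℝ) : Prop where
  pow_eq : x ^ 32 = N
  two_mul_le : 2 * N ≤ M
  le_mul : (M : ℝ) ≤ C1 * N

theorem choose_le_three_mul_div_pow (N : ℕ) {r : ℕ} (hr : 0 < r) :
    (N.choose r : ℝ) ≤ (3 * N / r) ^ r := by
  have hr' : (0 : ℝ) < r := by exact_mod_cast hr
  have h1 : (N.choose r : ℝ) ≤ (N : ℝ) ^ r / r.factorial := Nat.choose_le_pow_div r N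
  have h2 : (r : ℝ) ^ r / r.factorial ≤ 3 ^ r := by
    refine (Real.pow_div_factorial_le_exp (r : ℝ) hr'.le r).trans ?_
    rw [show (r : ℝ) = r * 1 by ring, Real.exp_nat_mul]
    exact pow_le_pow_left₀ (Real.exp_pos _).le (Real.exp_one_lt_d9.le.trans (by norm_num)) _
  refine h1.trans ?_
  calc (N : ℝ) ^ r / r.factorial = (N / r : ℝ) ^ r * ((r : ℝ) ^ r / r.factorial) := by
        rw [div_pow]; field_simp
    _ ≤ (N / r : ℝ) ^ r * 3 ^ r := by gcongr
    _ = _ := by rw [← mul_pow]; ring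

theorem exists_card_inDegree_gt_le (hk : 2 ≤ k) (hC1 : 0 < C1) :
    ∃ c x₀ : ℝ, 0 ≤ c ∧ ∀ N M x, EdgeScale C1 N M x → x₀ ≤ x →
      (#{E ∈ dicores k1 k2 N M | ∃ v, ⌊x⌋₊ < inDegree E v} : ℝ) ≤
        c * #(dicores k1 k2 N M) / (N : ℝ) ^ (2 * (k - 1)) := by
  set j := 64 * k with hj
  refine ⟨(8 * C1) ^ j, 2 * j + 2 * k1 + 8 * C1 + 2, by positivity, ?_⟩
  intro N M x hs hx
  have hkj : (128 : ℝ) ≤ j := by rw [hj]; push_cast; have : (2 : ℝ) ≤ k := by exact_mod_cast hk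
                                 linarith
  have hk1 : (0 : ℝ) ≤ k1 := by positivity
  have hx1 : 2 ≤ x := by linarith
  have hx0 : 0 < x := by linarith
  have hN2 : (2 : ℝ) ≤ N := by
    rw [← hs.pow_eq]
    calc (2 : ℝ) ≤ 2 ^ 32 := by norm_num
      _ ≤ x ^ 32 := by gcongr
  have hNpos : (0 : ℝ) < N := by linarith
  have hN1 : 1 ≤ N := by exact_mod_cast (by linarith : (1 : ℝ) ≤ N)
  have hfl := Nat.lt_floor_add_one x
  have hjD : j + k1 ≤ ⌊x⌋₊ := by
    apply Nat.le_floor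
    push_cast
    linarith
  obtain ⟨d, hd⟩ : ∃ d, ⌊x⌋₊ + 1 = d + j := ⟨⌊x⌋₊ + 1 - j, by omega⟩
  have hdx : x / 2 ≤ ((d + 1 : ℕ) : ℝ) := by
    have : (⌊x⌋₊ : ℝ) + 1 = d + j := by exact_mod_cast hd
    push_cast
    linarith
  have hbig : x * N / 4 ≤ (((d + 1) * (N - 1) : ℕ) : ℝ) := by
    rw [Nat.cast_mul, Nat.cast_sub hN1, Nat.cast_one]
    calc x * N / 4 = (x / 2) * (N / 2) := by ring
      _ ≤ _ := by gcongr; linarith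
  have hMx : (M : ℝ) ≤ x * N / 8 := by
    refine hs.le_mul.trans ?_
    nlinarith
  have hMle : M ≤ (d + 1) * (N - 1) := by
    have : (M : ℝ) ≤ (((d + 1) * (N - 1) : ℕ) : ℝ) := by nlinarith [mul_pos hx0 hNpos]
    exact_mod_cast this
  obtain ⟨U, hU⟩ : ∃ U, U + M = (d + 1) * (N - 1) := ⟨_, Nat.sub_add_cancel hMle⟩
  have hUx : x * N / 8 ≤ (U : ℝ) := by
    have : (U : ℝ) + M = (((d + 1) * (N - 1) : ℕ) : ℝ) := by exact_mod_cast hU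
    linarith
  set T := #(dicores k1 k2 N M)
  have hv : ∀ v : Fin N, (#{E ∈ dicores k1 k2 N M | ⌊x⌋₊ < inDegree E v} : ℝ) ≤
      T * ((8 * C1) ^ j / (N : ℝ) ^ (2 * k)) := by
    intro v
    have h := card_inDegree_mul_pow_le (k1 := k1) (k2 := k2) (M := M) v (d := d) (U := U)
      (by omega) hU.le j
    rw [← hd] at h
    simp only [Nat.succ_le_iff] at h
    have h' : (#{E ∈ dicores k1 k2 N M | ⌊x⌋₊ < inDegree E v} : ℝ) * (U : ℝ) ^ j ≤
        T * (M : ℝ) ^ j := by exact_mod_cast h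
    have h1 : (#{E ∈ dicores k1 k2 N M | ⌊x⌋₊ < inDegree E v} : ℝ) * (x * N / 8) ^ j ≤
        T * (C1 * N) ^ j := by
      refine le_trans (by gcongr) (h'.trans ?_)
      gcongr
      exact hs.le_mul
    rw [← le_div_iff₀ (by positivity)] at h1
    refine h1.trans (le_of_eq ?_)
    rw [← hs.pow_eq, ← pow_mul, show 32 * (2 * k) = j by omega, mul_div_assoc, ← div_pow, ← div_pow]
    congr 2
    field_simp
  calc (#{E ∈ dicores k1 k2 N M | ∃ v, ⌊x⌋₊ < inDegree E v} : ℝ)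
      ≤ ∑ v : Fin N, (#{E ∈ dicores k1 k2 N M | ⌊x⌋₊ < inDegree E v} : ℝ) := by
        have : {E ∈ dicores k1 k2 N M | ∃ v, ⌊x⌋₊ < inDegree E v} ⊆
            univ.biUnion fun v => {E ∈ dicores k1 k2 N M | ⌊x⌋₊ < inDegree E v} := by
          intro E hE
          obtain ⟨h1, v, h2⟩ := mem_filter.1 hE
          exact mem_biUnion.2 ⟨v, mem_univ _, mem_filter.2 ⟨h1, h2⟩⟩
        exact_mod_cast (card_le_card this).trans card_biUnion_le
    _ ≤ ∑ v : Fin N, T * ((8 * C1) ^ j / (N : ℝ) ^ (2 * k)) := Finset.sum_le_sum fun v _ => hv v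
    _ = N * (T * ((8 * C1) ^ j / (N : ℝ) ^ (2 * k))) := by simp
    _ ≤ N ^ 2 * (T * ((8 * C1) ^ j / (N : ℝ) ^ (2 * k))) := by
        gcongr
        nlinarith
    _ = _ := by
        rw [show 2 * k = 2 + 2 * (k - 1) by omega, pow_add]
        field_simp

/-- The inequality that makes the switching bound for confined sets applicable. -/
theorem EdgeScale.confined_le {N M : ℕ} {x : ℝ} (hs : EdgeScale C1 N M x) (hx : 2 ≤ x)
    (hkx : (k : ℝ) ≤ x) {p r : ℕ} (hp : p ≤ 2 * ⌊x ^ 24⌋₊) (hr : r ≤ 3 * ⌊x ^ 24⌋₊) :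
    N + p * k + 3 * ⌊x⌋₊ ^ 2 + r * ⌊x⌋₊ ≤ M := by
  refine le_trans ?_ hs.two_mul_le
  have hx0 : 0 < x := by linarith
  have h1 : (⌊x⌋₊ : ℝ) ≤ x := Nat.floor_le hx0.le
  have h2 : (⌊x ^ 24⌋₊ : ℝ) ≤ x ^ 24 := Nat.floor_le (by positivity)
  have hp' : (p : ℝ) ≤ 2 * x ^ 24 := by
    have : (p : ℝ) ≤ 2 * ⌊x ^ 24⌋₊ := by exact_mod_cast hp
    linarith
  have hr' : (r : ℝ) ≤ 3 * x ^ 24 := by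
    have : (r : ℝ) ≤ 3 * ⌊x ^ 24⌋₊ := by exact_mod_cast hr
    linarith
  have key : (p : ℝ) * k + 3 * (⌊x⌋₊ : ℝ) ^ 2 + r * ⌊x⌋₊ ≤ N := by
    rw [← hs.pow_eq]
    calc (p : ℝ) * k + 3 * (⌊x⌋₊ : ℝ) ^ 2 + r * ⌊x⌋₊
        ≤ (2 * x ^ 24) * x + 3 * x ^ 2 + (3 * x ^ 24) * x := by gcongr
      _ ≤ (2 * x ^ 24) * x + 3 * x ^ 25 + (3 * x ^ 24) * x := by
          gcongr
          · linarith
          · norm_num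
      _ = 2 ^ 3 * x ^ 25 := by ring
      _ ≤ x ^ 3 * x ^ 25 := by gcongr
      _ = x ^ 28 := by ring
      _ ≤ x ^ 32 := by gcongr <;> [linarith; norm_num]
  have : (((N + p * k + 3 * ⌊x⌋₊ ^ 2 + r * ⌊x⌋₊ : ℕ)) : ℝ) ≤ ((2 * N : ℕ) : ℝ) := by
    push_cast
    linarith
  exact_mod_cast this

open Classical in
theorem EdgeScale.card_hasConfined_le {N M : ℕ} {x : ℝ} (hs : EdgeScale C1 N M x) (hx : 2 ≤ x)
    (hk2 : k ≤ k2) (hkx : (k : ℝ) ≤ x) {p r : ℕ} (hr0 : 0 < r) (hp : p ≤ 2 * ⌊x ^ 24⌋₊)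
    (hr : r ≤ 3 * ⌊x ^ 24⌋₊) :
    (#{E ∈ boundedDicores k1 k2 N M ⌊x⌋₊ | HasConfined E p r} : ℝ) ≤
      #(dicores k1 k2 N M) * ((3 * N / r) ^ r * r.choose p * (r * x / N) ^ (p * k)) := by
  have hx0 : 0 < x := by linarith
  have hN0 : (0 : ℝ) < N := by rw [← hs.pow_eq]; positivity
  have h := card_hasConfined_mul_pow_le (k1 := k1) (N := N) hk2 (hs.confined_le hx hkx hp hr)
  have h' : (#{E ∈ boundedDicores k1 k2 N M ⌊x⌋₊ | HasConfined E p r} : ℝ) * (N : ℝ) ^ (p * k) ≤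
      N.choose r * r.choose p * (#(dicores k1 k2 N M) * ((r : ℝ) * ⌊x⌋₊) ^ (p * k)) := by
    exact_mod_cast h
  rw [← le_div_iff₀ (by positivity)] at h'
  refine h'.trans ?_
  have h1 : (⌊x⌋₊ : ℝ) ≤ x := Nat.floor_le hx0.le
  calc _ ≤ (3 * N / r : ℝ) ^ r * r.choose p * (#(dicores k1 k2 N M) * ((r : ℝ) * x) ^ (p * k)) /
        (N : ℝ) ^ (p * k) := by
        gcongr
        exact choose_le_three_mul_div_pow N hr0
    _ = _ := by rw [div_pow (_ * x)]; ring

open Classical in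
theorem exists_card_expansion_failure_le (hk : 2 ≤ k) (hk2 : k ≤ k2) :
    ∃ c x₀ : ℝ, 0 ≤ c ∧ ∀ N M x, EdgeScale C1 N M x → x₀ ≤ x →
      (#{E ∈ boundedDicores k1 k2 N M ⌊x⌋₊ |
          HasConfined E (2 * ⌊x ^ 24⌋₊) (3 * ⌊x ^ 24⌋₊)} : ℝ) ≤
        c * #(dicores k1 k2 N M) / (N : ℝ) ^ (2 * (k - 1)) := by
  refine ⟨1, 64 * k + 10, zero_le_one, ?_⟩
  intro N M x hs hx
  have hkR : (2 : ℝ) ≤ k := by exact_mod_cast hk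
  have hx10 : 10 ≤ x := by linarith
  have hx0 : 0 < x := by linarith
  have hN0 : (0 : ℝ) < N := by rw [← hs.pow_eq]; positivity
  set m := ⌊x ^ 24⌋₊ with hm
  have hmk : 64 * k ≤ m := by
    apply Nat.le_floor
    push_cast
    calc (64 * k : ℝ) ≤ x := by linarith
      _ ≤ x ^ 24 := le_self_pow₀ (by linarith) (by norm_num)
  have hm0 : (0 : ℝ) < m := by exact_mod_cast (by omega : 0 < m)
  have hmx : (m : ℝ) ≤ x ^ 24 := Nat.floor_le (by positivity)
  have h := hs.card_hasConfined_le (k1 := k1) (by linarith) hk2 (by linarith) (p := 2 * m)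
    (r := 3 * m) (by omega) le_rfl le_rfl
  refine h.trans ?_
  have hq : ((3 * m : ℕ) : ℝ) * x / N ≤ 1 := by
    rw [div_le_one hN0, ← hs.pow_eq]
    push_cast
    calc 3 * (m : ℝ) * x ≤ x * x ^ 24 * x := by gcongr; linarith
      _ = x ^ 26 := by ring
      _ ≤ x ^ 32 := by gcongr <;> [linarith; norm_num]
  have hmain : (3 * N / ((3 * m : ℕ) : ℝ)) ^ (3 * m) * ((3 * m).choose (2 * m) : ℝ) *
      (((3 * m : ℕ) : ℝ) * x / N) ^ (2 * m * k) ≤ 1 / (N : ℝ) ^ (2 * (k - 1)) := by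
    calc _ ≤ (3 * N / ((3 * m : ℕ) : ℝ)) ^ (3 * m) * (2 : ℝ) ^ (3 * m) *
          (((3 * m : ℕ) : ℝ) * x / N) ^ (2 * m * 2) := by
          refine mul_le_mul (mul_le_mul_of_nonneg_left ?_ (by positivity))
            (pow_le_pow_of_le_one (by positivity) hq (Nat.mul_le_mul_left _ hk))
            (by positivity) (by positivity)
          exact_mod_cast Nat.choose_le_two_pow _ _
      _ = (648 * m * x ^ 4 / N) ^ m := by
          rw [pow_mul, pow_mul, show 2 * m * 2 = 4 * m by ring, pow_mul, ← mul_pow, ← mul_pow]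
          push_cast
          congr 1
          field_simp
          ring
      _ ≤ (1 / x) ^ m := by
          refine pow_le_pow_left₀ (by positivity) ?_ _
          rw [div_le_div_iff₀ hN0 hx0, ← hs.pow_eq]
          calc 648 * (m : ℝ) * x ^ 4 * x ≤ x ^ 3 * x ^ 24 * x ^ 4 * x := by
                gcongr
                calc (648 : ℝ) ≤ 10 ^ 3 := by norm_num
                  _ ≤ x ^ 3 := by gcongr
            _ = 1 * x ^ 32 := by ring
      _ ≤ (1 / x) ^ (32 * (2 * (k - 1))) := by
          refine pow_le_pow_of_le_one (by positivity) ?_ (by omega)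
          rw [div_le_one hx0]; linarith
      _ = _ := by rw [one_div, inv_pow, pow_mul, hs.pow_eq, one_div]
  calc _ ≤ (#(dicores k1 k2 N M) : ℝ) * (1 / (N : ℝ) ^ (2 * (k - 1))) := by gcongr
    _ = _ := by ring

open Classical in
theorem EdgeScale.card_closed_le {N M : ℕ} {x : ℝ} (hs : EdgeScale C1 N M x) (hx : 2 ≤ x)
    (hk : 1 ≤ k) (hk2 : k ≤ k2) (hkx : (k : ℝ) ≤ x) {r : ℕ} (hr0 : 0 < r)
    (hr : r ≤ 2 * ⌊x ^ 24⌋₊) :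
    (#{E ∈ boundedDicores k1 k2 N M ⌊x⌋₊ | HasConfined E r r} : ℝ) ≤
      #(dicores k1 k2 N M) * (3 * x * (r * x / N) ^ (k - 1)) ^ r := by
  have hx0 : 0 < x := by linarith
  have hN0 : (0 : ℝ) < N := by rw [← hs.pow_eq]; positivity
  have hr' : (0 : ℝ) < r := by exact_mod_cast hr0
  refine (hs.card_hasConfined_le hx hk2 hkx hr0 hr (by omega)).trans (le_of_eq ?_)
  rw [Nat.choose_self, Nat.cast_one, mul_one, mul_comm r k, pow_mul, ← mul_pow]
  obtain ⟨l, rfl⟩ : ∃ l, k = l + 1 := ⟨k - 1, by omega⟩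
  rw [Nat.add_sub_cancel, pow_succ]
  congr 2
  field_simp

open Classical in
theorem exists_card_closed_le (hk : 2 ≤ k) (hk2 : k ≤ k2) :
    ∃ c x₀ : ℝ, 0 ≤ c ∧ ∀ N M x, EdgeScale C1 N M x → x₀ ≤ x →
      (#{E ∈ boundedDicores k1 k2 N M ⌊x⌋₊ |
          ∃ r, 0 < r ∧ r < 2 * ⌊x ^ 24⌋₊ ∧ HasConfined E r r} : ℝ) ≤
        c * #(dicores k1 k2 N M) / (N : ℝ) ^ (2 * (k - 1)) := by
  set r₀ := 64 * k with hr₀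
  set a : ℝ := (3 * (r₀ : ℝ) ^ (k - 1)) ^ r₀ with ha
  refine ⟨r₀ * a + 1, k + 10, by positivity, ?_⟩
  intro N M x hs hx
  have hkR : (2 : ℝ) ≤ k := by exact_mod_cast hk
  have hx10 : 10 ≤ x := by linarith
  have hx0 : 0 < x := by linarith
  have hx1 : 1 ≤ x := by linarith
  have hN0 : (0 : ℝ) < N := by rw [← hs.pow_eq]; positivity
  have hN1 : (1 : ℝ) ≤ N := by rw [← hs.pow_eq]; exact one_le_pow₀ hx1
  have hmx : (⌊x ^ 24⌋₊ : ℝ) ≤ x ^ 24 := Nat.floor_le (by positivity)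
  set m := ⌊x ^ 24⌋₊ with hm
  set T := #(dicores k1 k2 N M) with hT
  have hsmall : ∀ r, 3 ≤ r → r < r₀ → r < 2 * m →
      (#{E ∈ boundedDicores k1 k2 N M ⌊x⌋₊ | HasConfined E r r} : ℝ) ≤
        T * (a / (N : ℝ) ^ (2 * (k - 1))) := by
    intro r h3 hr hrm
    refine (hs.card_closed_le (by linarith) (by omega) hk2 (by linarith) (by omega)
      hrm.le).trans ?_
    gcongr
    set z : ℝ := x ^ k / (N : ℝ) ^ (k - 1) with hz
    have hz1 : z ≤ 1 := by
      rw [hz, div_le_one (by positivity), ← hs.pow_eq, ← pow_mul]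
      exact pow_le_pow_right₀ hx1 (by omega)
    have hb : (1 : ℝ) ≤ 3 * (r₀ : ℝ) ^ (k - 1) := by
      have : (1 : ℝ) ≤ (r₀ : ℝ) ^ (k - 1) := one_le_pow₀ (by exact_mod_cast (by omega : 1 ≤ r₀))
      linarith
    calc (3 * x * (r * x / N) ^ (k - 1)) ^ r
        ≤ (3 * x * (r₀ * x / N) ^ (k - 1)) ^ r := by gcongr
      _ = (3 * (r₀ : ℝ) ^ (k - 1) * z) ^ r := by
          congr 1
          rw [hz, div_pow, mul_pow, show x ^ k = x * x ^ (k - 1) by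
            rw [← pow_succ', Nat.sub_add_cancel (by omega)]]
          ring
      _ = (3 * (r₀ : ℝ) ^ (k - 1)) ^ r * z ^ r := mul_pow _ _ _
      _ ≤ a * z ^ 3 := by
          refine mul_le_mul (pow_le_pow_right₀ hb hr.le) ?_ (by positivity) (by positivity)
          exact pow_le_pow_of_le_one (by positivity) hz1 h3
      _ ≤ a * (1 / (N : ℝ) ^ (2 * (k - 1))) := by
          gcongr
          rw [hz, div_pow, div_le_div_iff₀ (by positivity) (by positivity), ← hs.pow_eq]
          simp only [← pow_mul, ← pow_add, one_mul]
          exact pow_le_pow_right₀ hx1 (by omega)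
      _ = _ := by ring
  have hlarge : ∀ r, r₀ ≤ r → r < 2 * m →
      (#{E ∈ boundedDicores k1 k2 N M ⌊x⌋₊ | HasConfined E r r} : ℝ) ≤
        T * (1 / (N : ℝ) ^ (2 * k)) := by
    intro r hr hrm
    refine (hs.card_closed_le (by linarith) (by omega) hk2 (by linarith) (by omega)
      hrm.le).trans ?_
    have hrx : (r : ℝ) ≤ 2 * x ^ 24 := by
      have : (r : ℝ) ≤ 2 * m := by exact_mod_cast hrm.le
      linarith
    have h1 : (r : ℝ) * x / N ≤ 2 / x ^ 7 := by
      rw [div_le_div_iff₀ hN0 (by positivity), ← hs.pow_eq]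
      calc (r : ℝ) * x * x ^ 7 ≤ 2 * x ^ 24 * x * x ^ 7 := by gcongr
        _ = 2 * x ^ 32 := by ring
    have h2 : 2 / x ^ 7 ≤ 1 := by
      rw [div_le_one (by positivity)]
      calc (2 : ℝ) ≤ x := by linarith
        _ ≤ x ^ 7 := le_self_pow₀ hx1 (by norm_num)
    have h3 : 3 * x * (r * x / N) ^ (k - 1) ≤ 1 / x := by
      calc 3 * x * (r * x / N) ^ (k - 1) ≤ 3 * x * (r * x / N) ^ 1 := by
            refine mul_le_mul_of_nonneg_left ?_ (by positivity)
            exact pow_le_pow_of_le_one (by positivity) (h1.trans h2) (by omega)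
        _ ≤ 3 * x * (2 / x ^ 7) := by rw [pow_one]; gcongr
        _ ≤ 1 / x := by
            rw [mul_div_assoc', div_le_div_iff₀ (by positivity) hx0]
            calc 3 * x * 2 * x = 6 * x ^ 2 := by ring
              _ ≤ x * x ^ 2 := by gcongr; linarith
              _ = x ^ 3 := by ring
              _ ≤ 1 * x ^ 7 := by rw [one_mul]; exact pow_le_pow_right₀ hx1 (by norm_num)
    gcongr
    calc (3 * x * (r * x / N) ^ (k - 1)) ^ r ≤ (1 / x) ^ r :=
          pow_le_pow_left₀ (by positivity) h3 _
      _ ≤ (1 / x) ^ (32 * (2 * k)) := by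
          refine pow_le_pow_of_le_one (by positivity) ?_ (by omega)
          rw [div_le_one hx0]; exact hx1
      _ = _ := by rw [one_div, inv_pow, pow_mul, hs.pow_eq, one_div]
  set S₁ := {r ∈ Ico 3 r₀ | r < 2 * m}
  set S₂ := Ico r₀ (2 * m)
  have hS₁ : (#S₁ : ℝ) ≤ r₀ := by
    have : #S₁ ≤ r₀ := (card_filter_le _ _).trans (by simp)
    exact_mod_cast this
  have hS₂ : (#S₂ : ℝ) ≤ (N : ℝ) ^ 2 := by
    have h1 : #S₂ ≤ 2 * m := by simp [S₂]
    have h2 : (#S₂ : ℝ) ≤ 2 * m := by exact_mod_cast h1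
    refine h2.trans ?_
    rw [← hs.pow_eq]
    calc (2 : ℝ) * m ≤ x * x ^ 24 := by gcongr; linarith
      _ = x ^ 25 := by ring
      _ ≤ (x ^ 32) ^ 2 := by rw [← pow_mul]; exact pow_le_pow_right₀ hx1 (by norm_num)
  have hsub : {E ∈ boundedDicores k1 k2 N M ⌊x⌋₊ |
        ∃ r, 0 < r ∧ r < 2 * m ∧ HasConfined E r r} ⊆
      (S₁.biUnion fun r => {E ∈ boundedDicores k1 k2 N M ⌊x⌋₊ | HasConfined E r r}) ∪
      (S₂.biUnion fun r => {E ∈ boundedDicores k1 k2 N M ⌊x⌋₊ | HasConfined E r r}) := by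
    intro E hE
    obtain ⟨hE, r, h1, h2, h3⟩ := mem_filter.1 hE
    have hrk : k2 < r := by
      by_contra! hle
      exact not_hasConfined_self (mem_boundedDicores.1 hE).1 h1 hle h3
    rw [mem_union, mem_biUnion, mem_biUnion]
    by_cases hr : r < r₀
    · exact Or.inl ⟨r, by simp only [S₁, mem_filter, mem_Ico]; omega, mem_filter.2 ⟨hE, h3⟩⟩
    · exact Or.inr ⟨r, by simp only [S₂, mem_Ico]; omega, mem_filter.2 ⟨hE, h3⟩⟩
  have hcard := (card_le_card hsub).trans ((card_union_le _ _).trans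
    (add_le_add card_biUnion_le card_biUnion_le))
  have hcard' : (#{E ∈ boundedDicores k1 k2 N M ⌊x⌋₊ |
        ∃ r, 0 < r ∧ r < 2 * m ∧ HasConfined E r r} : ℝ) ≤
      ∑ r ∈ S₁, (#{E ∈ boundedDicores k1 k2 N M ⌊x⌋₊ | HasConfined E r r} : ℝ) +
      ∑ r ∈ S₂, (#{E ∈ boundedDicores k1 k2 N M ⌊x⌋₊ | HasConfined E r r} : ℝ) := by
    exact_mod_cast hcard
  refine hcard'.trans ?_
  have e1 := Finset.sum_le_card_nsmul S₁ _ _ fun r hr => by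
    simp only [S₁, mem_filter, mem_Ico] at hr
    exact hsmall r hr.1.1 hr.1.2 hr.2
  have e2 := Finset.sum_le_card_nsmul S₂ _ _ fun r hr => by
    simp only [S₂, mem_Ico] at hr
    exact hlarge r hr.1 hr.2
  rw [nsmul_eq_mul] at e1 e2
  calc _ ≤ #S₁ * (T * (a / (N : ℝ) ^ (2 * (k - 1)))) + #S₂ * (T * (1 / (N : ℝ) ^ (2 * k))) :=
        add_le_add e1 e2
    _ ≤ r₀ * (T * (a / (N : ℝ) ^ (2 * (k - 1)))) + N ^ 2 * (T * (1 / (N : ℝ) ^ (2 * k))) := by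
        gcongr
    _ = _ := by
        rw [show 2 * k = 2 + 2 * (k - 1) by omega, pow_add]
        field_simp

open Classical in
theorem exists_card_separated_le (hk : 2 ≤ k) (hk1 : k ≤ k1) (hk2 : k ≤ k2) (hC1 : 0 < C1) :
    ∃ c x₀ : ℝ, 0 ≤ c ∧ ∀ N M x, EdgeScale C1 N M x → x₀ ≤ x →
      (#{E ∈ boundedDicores k1 k2 N M ⌊x⌋₊ | ∃ u v,
          SeparatedExplorations E u v (2 * ⌊x ^ 24⌋₊) ⌊x ^ 24⌋₊ ∧
          edgeCount E (explorationFrontier E u (2 * ⌊x ^ 24⌋₊))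
            (explorationFrontier (reverseEdges E) v (2 * ⌊x ^ 24⌋₊)) = 0} : ℝ) ≤
        c * #(dicores k1 k2 N M) / (N : ℝ) ^ (2 * (k - 1)) := by
  set j := 4 * k with hj
  refine ⟨j.factorial * (4 * C1) ^ j, 4 * k + 10, by positivity, ?_⟩
  intro N M x hs hx
  have hkR : (2 : ℝ) ≤ k := by exact_mod_cast hk
  have hx10 : 10 ≤ x := by linarith
  have hx0 : 0 < x := by linarith
  have hx1 : 1 ≤ x := by linarith
  have hN0 : (0 : ℝ) < N := by rw [← hs.pow_eq]; positivity
  have hDx : (⌊x⌋₊ : ℝ) ≤ x := Nat.floor_le hx0.le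
  have hmx : x ^ 24 / 2 ≤ (⌊x ^ 24⌋₊ : ℝ) := by
    have h1 := Nat.lt_floor_add_one (x ^ 24)
    have h2 : x ≤ x ^ 24 := le_self_pow₀ hx1 (by norm_num)
    linarith
  have hjm : j + 3 * ⌊x⌋₊ ^ 2 ≤ ⌊x ^ 24⌋₊ := by
    have h1 : (j : ℝ) ≤ x := by rw [hj]; push_cast; linarith
    have : (j : ℝ) + 3 * (⌊x⌋₊ : ℝ) ^ 2 ≤ (⌊x ^ 24⌋₊ : ℝ) := by
      calc (j : ℝ) + 3 * (⌊x⌋₊ : ℝ) ^ 2 ≤ x + 3 * x ^ 2 := by gcongr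
        _ ≤ x ^ 2 + 3 * x ^ 2 := by gcongr; exact le_self_pow₀ hx1 (by norm_num)
        _ = 8 * x ^ 2 / 2 := by ring
        _ ≤ x * x ^ 2 / 2 := by gcongr; linarith
        _ = x ^ 3 / 2 := by ring
        _ ≤ x ^ 24 / 2 := by gcongr 1; exact pow_le_pow_right₀ hx1 (by norm_num)
        _ ≤ _ := hmx
    exact_mod_cast this
  set m := ⌊x ^ 24⌋₊ with hm
  have hm0 : (0 : ℝ) < m := lt_of_lt_of_le (by positivity) hmx
  have h2m : 2 * m ≤ m * k := by rw [mul_comm]; exact Nat.mul_le_mul_left _ hk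
  set T := #(dicores k1 k2 N M) with hT
  set B : Fin N → Fin N → Finset (Finset (Fin N × Fin N)) := fun u v =>
    {E ∈ boundedDicores k1 k2 N M ⌊x⌋₊ | SeparatedExplorations E u v (2 * m) m ∧
      edgeCount E (explorationFrontier E u (2 * m))
        (explorationFrontier (reverseEdges E) v (2 * m)) = 0} with hB
  have huv : ∀ u v, (#(B u v) : ℝ) ≤
      T * (j.factorial * (4 * C1) ^ j / (N : ℝ) ^ (2 * k)) := by
    intro u v
    have h := card_separated_mul_le (M := M) (D := ⌊x⌋₊) hk1 hk2 u v (2 * m) m j m (by omega)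
    have h' : (#(B u v) : ℝ) * ((m * k).choose j * (m : ℝ) ^ j) ≤ T * (M : ℝ) ^ j := by
      exact_mod_cast h
    have hch : (m : ℝ) ^ j ≤ j.factorial * (m * k).choose j := by
      have h1 : (m * k + 1 - j) ^ j ≤ j.factorial * (m * k).choose j := by
        rw [← Nat.descFactorial_eq_factorial_mul_choose]
        exact Nat.pow_sub_le_descFactorial _ _
      have h2 : m ^ j ≤ (m * k + 1 - j) ^ j := Nat.pow_le_pow_left (by omega) _
      exact_mod_cast h2.trans h1
    have h3 : (#(B u v) : ℝ) * (x ^ 48 / 4) ^ j ≤ j.factorial * (T * (C1 * N) ^ j) := by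
      calc (#(B u v) : ℝ) * (x ^ 48 / 4) ^ j = #(B u v) * ((x ^ 24 / 2) ^ j * (x ^ 24 / 2) ^ j) := by
            rw [← mul_pow]; ring_nf
        _ ≤ #(B u v) * ((m : ℝ) ^ j * (m : ℝ) ^ j) := by gcongr
        _ ≤ #(B u v) * ((j.factorial * (m * k).choose j) * (m : ℝ) ^ j) := by gcongr
        _ = j.factorial * (#(B u v) * ((m * k).choose j * (m : ℝ) ^ j)) := by ring
        _ ≤ j.factorial * (T * (M : ℝ) ^ j) := by gcongr
        _ ≤ _ := by gcongr; exact hs.le_mul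
    rw [← le_div_iff₀ (by positivity)] at h3
    refine h3.trans (le_of_eq ?_)
    have h4 : (N : ℝ) ^ (2 * k) = (x ^ 16) ^ j := by
      rw [← hs.pow_eq, ← pow_mul, ← pow_mul]; congr 1; omega
    have h5 : C1 * N / (x ^ 48 / 4) = 4 * C1 / x ^ 16 := by
      rw [← hs.pow_eq]; field_simp
    rw [h4, mul_div_assoc, mul_div_assoc, ← div_pow, h5, div_pow]
    ring
  have hsub : {E ∈ boundedDicores k1 k2 N M ⌊x⌋₊ | ∃ u v, SeparatedExplorations E u v (2 * m) m ∧
      edgeCount E (explorationFrontier E u (2 * m))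
        (explorationFrontier (reverseEdges E) v (2 * m)) = 0} ⊆
      (univ : Finset (Fin N × Fin N)).biUnion fun s => B s.1 s.2 := by
    intro E hE
    obtain ⟨hE, u, v, h⟩ := mem_filter.1 hE
    exact mem_biUnion.2 ⟨(u, v), mem_univ _, mem_filter.2 ⟨hE, h⟩⟩
  calc _ ≤ ∑ s : Fin N × Fin N, (#(B s.1 s.2) : ℝ) := by
        exact_mod_cast (card_le_card hsub).trans card_biUnion_le
    _ ≤ ∑ s : Fin N × Fin N, T * (j.factorial * (4 * C1) ^ j / (N : ℝ) ^ (2 * k)) :=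
        Finset.sum_le_sum fun s _ => huv s.1 s.2
    _ = N ^ 2 * (T * (j.factorial * (4 * C1) ^ j / (N : ℝ) ^ (2 * k))) := by
        simp [pow_two]
    _ = _ := by
        rw [show 2 * k = 2 + 2 * (k - 1) by omega, pow_add]
        field_simp

end Estimates

open Classical in
theorem card_filter_boundedDicores_reverseEdges_le {k1 k2 N M D : ℕ}
    (Q : Finset (Fin N × Fin N) → Prop) :
    #{E ∈ boundedDicores k1 k2 N M D | Q (reverseEdges E)} ≤
      #{E ∈ boundedDicores k2 k1 N M D | Q E} := by
  refine Finset.card_le_card_of_injOn reverseEdges ?_ ?_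
  · intro E hE
    rw [mem_coe, mem_filter] at hE ⊢
    exact ⟨reverseEdges_mem_boundedDicores hE.1, hE.2⟩
  · intro E _ E' _ h
    rw [← reverseEdges_reverseEdges E, h, reverseEdges_reverseEdges]

theorem strongly_connected_dicore_count
    (k1 k2 : ℕ) (hk1 : 2 ≤ k1) (hk2 : 2 ≤ k2) (ε C1 : ℝ) (hε : 0 < ε)
    (hC1 : ((max k1 k2 : ℕ) : ℝ) + ε < C1) :
    ∃ C : ℝ, 0 < C ∧ ∀ N M : ℕ, 0 < N → 0 < M →
      (((max k1 k2 : ℕ) : ℝ) + ε) * N ≤ M → (M : ℝ) ≤ C1 * N →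
      (Nat.card {E : Finset (Fin N × Fin N) //
          IsDicore k1 k2 N M E ∧ ¬ StronglyConnected E} : ℝ) ≤
        C * (Nat.card {E : Finset (Fin N × Fin N) // IsDicore k1 k2 N M E} : ℝ) /
          (N : ℝ) ^ (2 * (min k1 k2 - 1)) := by
  classical
  set k := min k1 k2 with hkdef
  have hk : 2 ≤ k := le_min hk1 hk2
  have hkk1 : k ≤ k1 := min_le_left _ _
  have hkk2 : k ≤ k2 := min_le_right _ _
  have hmax : (2 : ℝ) ≤ ((max k1 k2 : ℕ) : ℝ) := by exact_mod_cast hk1.trans (le_max_left _ _)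
  have hC0 : 0 < C1 := by linarith
  obtain ⟨c₁, x₁, hc₁, h₁⟩ := exists_card_inDegree_gt_le (k1 := k1) (k2 := k2) hk hC0
  obtain ⟨c₂, x₂, hc₂, h₂⟩ := exists_card_inDegree_gt_le (k1 := k2) (k2 := k1) hk hC0
  obtain ⟨c₃, x₃, hc₃, h₃⟩ := exists_card_closed_le (k1 := k1) (C1 := C1) hk hkk2
  obtain ⟨c₄, x₄, hc₄, h₄⟩ := exists_card_closed_le (k1 := k2) (C1 := C1) hk hkk1
  obtain ⟨c₅, x₅, hc₅, h₅⟩ := exists_card_expansion_failure_le (k1 := k1) (C1 := C1) hk hkk2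
  obtain ⟨c₆, x₆, hc₆, h₆⟩ := exists_card_expansion_failure_le (k1 := k2) (C1 := C1) hk hkk1
  obtain ⟨c₇, x₇, hc₇, h₇⟩ := exists_card_separated_le hk hkk1 hkk2 hC0
  obtain ⟨X, hX⟩ : ∃ X : ℝ, X = |x₁| + |x₂| + |x₃| + |x₄| + |x₅| + |x₆| + |x₇| + 3 := ⟨_, rfl⟩
  have hX0 : 0 < X := by rw [hX]; positivity
  obtain ⟨A, hA⟩ : ∃ A : ℝ, A = (X ^ 32) ^ (2 * (k - 1)) := ⟨_, rfl⟩
  have hA0 : 0 < A := by rw [hA]; positivity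
  refine ⟨c₁ + c₂ + c₃ + c₄ + c₅ + c₆ + c₇ + A, by positivity, ?_⟩
  intro N M hN _ hMlow hMup
  have hNR : (0 : ℝ) < N := by exact_mod_cast hN
  have hT : Nat.card {E : Finset (Fin N × Fin N) // IsDicore k1 k2 N M E} =
      #(dicores k1 k2 N M) := by
    rw [Nat.card_eq_fintype_card, Fintype.card_subtype, dicores]
  have hBad : Nat.card {E : Finset (Fin N × Fin N) //
      IsDicore k1 k2 N M E ∧ ¬ StronglyConnected E} =
      #{E ∈ dicores k1 k2 N M | ¬ StronglyConnected E} := by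
    rw [Nat.card_eq_fintype_card, Fintype.card_subtype, dicores, filter_filter]
  rw [hT, hBad]
  set T := #(dicores k1 k2 N M) with hTdef
  rcases lt_or_ge (N : ℝ) (X ^ 32) with hNX | hNX
  · have h1 : (#{E ∈ dicores k1 k2 N M | ¬ StronglyConnected E} : ℝ) ≤ T := by
      exact_mod_cast card_filter_le _ _
    refine h1.trans ?_
    rw [le_div_iff₀ (by positivity), mul_comm]
    gcongr
    have h2 : (N : ℝ) ^ (2 * (k - 1)) ≤ A := by rw [hA]; gcongr
    linarith
  · set x : ℝ := (N : ℝ) ^ ((32 : ℕ) : ℝ)⁻¹ with hx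
    have hxpow : x ^ 32 = N := Real.rpow_inv_natCast_pow hNR.le (by norm_num)
    have hx0 : 0 ≤ x := by positivity
    have hXx : X ≤ x := by
      rw [← hxpow] at hNX
      exact le_of_pow_le_pow_left₀ (by norm_num) hx0 hNX
    have hs : EdgeScale C1 N M x := by
      refine ⟨hxpow, ?_, hMup⟩
      have : (2 : ℝ) * N ≤ M := by nlinarith
      exact_mod_cast this
    have a1 := le_abs_self x₁
    have a2 := le_abs_self x₂
    have a3 := le_abs_self x₃
    have a4 := le_abs_self x₄
    have a5 := le_abs_self x₅
    have a6 := le_abs_self x₆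
    have a7 := le_abs_self x₇
    have b1 := abs_nonneg x₁
    have b2 := abs_nonneg x₂
    have b3 := abs_nonneg x₃
    have b4 := abs_nonneg x₄
    have b5 := abs_nonneg x₅
    have b6 := abs_nonneg x₆
    have b7 := abs_nonneg x₇
    replace h₁ := h₁ N M x hs (by linarith)
    replace h₂ := h₂ N M x hs (by linarith)
    replace h₃ := h₃ N M x hs (by linarith)
    replace h₄ := h₄ N M x hs (by linarith)
    replace h₅ := h₅ N M x hs (by linarith)
    replace h₆ := h₆ N M x hs (by linarith)
    replace h₇ := h₇ N M x hs (by linarith)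
    rw [card_dicores_comm (k1 := k2) (k2 := k1)] at h₂ h₄ h₆
    replace h₂ : (#{E ∈ dicores k1 k2 N M | ∃ v, ⌊x⌋₊ < inDegree (reverseEdges E) v} : ℝ) ≤
        c₂ * #(dicores k1 k2 N M) / (N : ℝ) ^ (2 * (k - 1)) := by
      convert h₂ using 2
      convert card_filter_dicores_reverseEdges fun E => ∃ v, ⌊x⌋₊ < inDegree E v
    replace h₄ := (Nat.cast_le.2 (card_filter_boundedDicores_reverseEdges_le fun E =>
      ∃ r, 0 < r ∧ r < 2 * ⌊x ^ 24⌋₊ ∧ HasConfined E r r)).trans h₄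
    replace h₆ := (Nat.cast_le.2 (card_filter_boundedDicores_reverseEdges_le fun E =>
      HasConfined E (2 * ⌊x ^ 24⌋₊) (3 * ⌊x ^ 24⌋₊))).trans h₆
    have h3m : 3 * ⌊x ^ 24⌋₊ ≤ N := by
      have hx3 : 3 ≤ x := by linarith
      have h1 : (⌊x ^ 24⌋₊ : ℝ) ≤ x ^ 24 := Nat.floor_le (by positivity)
      have : (3 : ℝ) * ⌊x ^ 24⌋₊ ≤ N := by
        rw [← hxpow]
        calc (3 : ℝ) * ⌊x ^ 24⌋₊ ≤ x * x ^ 24 := by gcongr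
          _ = x ^ 25 := by ring
          _ ≤ x ^ 32 := pow_le_pow_right₀ (by linarith) (by norm_num)
      exact_mod_cast this
    set m := ⌊x ^ 24⌋₊
    set D := ⌊x⌋₊
    have hcover : {E ∈ dicores k1 k2 N M | ¬ StronglyConnected E} ⊆
        {E ∈ dicores k1 k2 N M | ∃ v, D < inDegree E v} ∪
        ({E ∈ dicores k1 k2 N M | ∃ v, D < inDegree (reverseEdges E) v} ∪
        ({E ∈ boundedDicores k1 k2 N M D | ∃ r, 0 < r ∧ r < 2 * m ∧ HasConfined E r r} ∪
        ({E ∈ boundedDicores k1 k2 N M D |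
            ∃ r, 0 < r ∧ r < 2 * m ∧ HasConfined (reverseEdges E) r r} ∪
        ({E ∈ boundedDicores k1 k2 N M D | HasConfined E (2 * m) (3 * m)} ∪
        ({E ∈ boundedDicores k1 k2 N M D | HasConfined (reverseEdges E) (2 * m) (3 * m)} ∪
        {E ∈ boundedDicores k1 k2 N M D | ∃ u v, SeparatedExplorations E u v (2 * m) m ∧
          edgeCount E (explorationFrontier E u (2 * m))
            (explorationFrontier (reverseEdges E) v (2 * m)) = 0}))))) := by
      intro E hE
      obtain ⟨hE, hsc⟩ := mem_filter.1 hE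
      simp only [mem_union, mem_filter, hE, true_and]
      by_cases g1 : ∃ v, D < inDegree E v
      · exact Or.inl g1
      by_cases g2 : ∃ v, D < inDegree (reverseEdges E) v
      · exact Or.inr (Or.inl g2)
      have hEb : E ∈ boundedDicores k1 k2 N M D := by
        push Not at g1 g2
        exact mem_filter.2 ⟨hE, fun v => ⟨g1 v, inDegree_reverseEdges E v ▸ g2 v⟩⟩
      simp only [hEb, true_and, g1, g2, false_or]
      by_contra! hcon
      obtain ⟨e1, e2, e3, e4, e5⟩ := hcon
      obtain ⟨u, v, h1, h2⟩ := exists_separated_of_not_stronglyConnected h3m hsc e1 e3 e2 e4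
      exact e5 u v h1 h2
    have hcard := (card_le_card hcover).trans ((card_union_le _ _).trans
      (add_le_add le_rfl ((card_union_le _ _).trans
      (add_le_add le_rfl ((card_union_le _ _).trans
      (add_le_add le_rfl ((card_union_le _ _).trans
      (add_le_add le_rfl ((card_union_le _ _).trans
      (add_le_add le_rfl (card_union_le _ _)))))))))))
    have hcardR := (Nat.cast_le (α := ℝ)).2 hcard
    push_cast at hcardR
    have h8 : 0 ≤ A * T / (N : ℝ) ^ (2 * (k - 1)) := by positivity
    calc _ ≤ _ := hcardR
      _ ≤ c₁ * T / (N : ℝ) ^ (2 * (k - 1)) + (c₂ * T / (N : ℝ) ^ (2 * (k - 1)) +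
          (c₃ * T / (N : ℝ) ^ (2 * (k - 1)) + (c₄ * T / (N : ℝ) ^ (2 * (k - 1)) +
          (c₅ * T / (N : ℝ) ^ (2 * (k - 1)) + (c₆ * T / (N : ℝ) ^ (2 * (k - 1)) +
          c₇ * T / (N : ℝ) ^ (2 * (k - 1))))))) := by
          gcongr
      _ ≤ _ := by
          rw [add_mul, add_div]
          refine le_trans (le_of_eq ?_) (le_add_of_nonneg_right h8)
          ring
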